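/- arXiv:2210.07773 — 9 statements merged into one kernel-verified Lean document; each statement's English description precedes it below -/
import Mathlib

section
/- Let n ≥ k ≥ 2 be integers and let λ ∈ (0,1] satisfy λ ≥ k²/n. Let s be a λ-dispersed preference model on n items. Then for every memory vector v ∈ Δ(n), the uniform vector x_U = (1/n, …, 1/n) lies in IRD(v); in particular, x_U ∈ EIRD. -/
open Finset

/-- The choice distribution induced by preference model `s` at memory vector `v`
when menu `K` is shown: item `i ∈ K` is chosen with probability proportional to its score. -/
noncomputable def menuDist {n : ℕ} (s : (Fin n → ℝ) → Fin n → ℝ)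
    (v : Fin n → ℝ) (K : Finset (Fin n)) : Fin n → ℝ :=
  fun i => if i ∈ K then s v i / ∑ j ∈ K, s v j else 0

/-- The set of instantaneously realizable distributions at memory vector `v`:
the convex hull of the induced distributions of all menus of size `k`. -/
noncomputable def IRD {n : ℕ} (k : ℕ) (s : (Fin n → ℝ) → Fin n → ℝ)
    (v : Fin n → ℝ) : Set (Fin n → ℝ) :=
  convexHull ℝ { p | ∃ K : Finset (Fin n), K.card = k ∧ p = menuDist s v K }

/-!
A distribution `q` is realizable as soon as the rescaled weights `q i / s v i` can serve as the
inclusion probabilities of a random `k`-element menu. These weights, normalized to have sum `k`, lie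
in the hypersimplex when none of them exceeds `1`, and the hypersimplex is the convex hull of the
indicators of `k`-element sets. Multiplying by the scores and projecting centrally onto the
hyperplane of total mass `1` turns each indicator into the choice distribution of its menu and the
weights back into `q`. Dispersion enters only to bound the weights: `k * q i / s v i ≤ 1` once
`k * q i ≤ λ`, while `∑ j, q j / s v j ≥ 1` because scores are at most `1`.
-/

/-- The hypersimplex of rank `k`: the slice of the unit cube by the hyperplane `∑ i, w i = k`.
It consists of the inclusion probabilities of random `k`-element subsets. -/
def hypersimplex (𝕜 ι : Type*) [Semiring 𝕜] [PartialOrder 𝕜] [Fintype ι] (k : ℕ) : Set (ι → 𝕜) :=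
  {w | (∀ i, w i ∈ Set.Icc 0 1) ∧ ∑ i, w i = k}

theorem exists_card_eq_and_threshold {ι α : Type*} [Fintype ι] [LinearOrder α] [Nonempty α]
    (d : ι → α) {k : ℕ} (hk : k ≤ Fintype.card ι) :
    ∃ (K : Finset ι) (t : α), #K = k ∧ (∀ i ∈ K, t ≤ d i) ∧ ∀ i ∉ K, d i ≤ t := by
  classical
  induction k with
  | zero =>
    obtain ⟨t, ht⟩ := (Set.finite_range d).bddAbove
    exact ⟨∅, t, rfl, by simp, fun i _ ↦ ht ⟨i, rfl⟩⟩
  | succ k ih =>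
    obtain ⟨K, t, hcard, hge, hle⟩ := ih (Nat.le_of_succ_le hk)
    have hne : Kᶜ.Nonempty := by rw [← card_pos, card_compl]; omega
    obtain ⟨j, hj, hmax⟩ := exists_max_image Kᶜ d hne
    rw [mem_compl] at hj
    refine ⟨insert j K, d j, by rw [card_insert_of_notMem hj, hcard], ?_, ?_⟩
    · exact (forall_mem_insert _ _ _).2 ⟨le_rfl, fun i hi ↦ (hle j hj).trans (hge i hi)⟩
    · exact fun i hi ↦ hmax i (mem_compl.2 fun hiK ↦ hi (mem_insert_of_mem hiK))

theorem le_card_of_mem_hypersimplex {𝕜 ι : Type*} [Semiring 𝕜] [PartialOrder 𝕜]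
    [IsStrictOrderedRing 𝕜] [Fintype ι] {k : ℕ} {w : ι → 𝕜} (hw : w ∈ hypersimplex 𝕜 ι k) :
    k ≤ Fintype.card ι := by
  have hle : ∑ i, w i ≤ ∑ _i : ι, (1 : 𝕜) := sum_le_sum fun i _ ↦ (hw.1 i).2
  rw [hw.2, sum_const, card_univ, nsmul_one] at hle
  exact_mod_cast hle

theorem exists_card_eq_sum_mul_le {𝕜 ι : Type*} [Ring 𝕜] [LinearOrder 𝕜]
    [IsStrictOrderedRing 𝕜] [Fintype ι] {k : ℕ} {w : ι → 𝕜} (hw : w ∈ hypersimplex 𝕜 ι k)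
    (c : ι → 𝕜) : ∃ K : Finset ι, #K = k ∧ ∑ i, w i * c i ≤ ∑ i ∈ K, c i := by
  classical
  obtain ⟨K, t, hcard, hge, hle⟩ :=
    exists_card_eq_and_threshold c (le_card_of_mem_hypersimplex hw)
  refine ⟨K, hcard, ?_⟩
  have hterm (i : ι) : w i * (c i - t) ≤ if i ∈ K then c i - t else 0 := by
    split_ifs with hi
    · exact mul_le_of_le_one_left (sub_nonneg.2 (hge i hi)) (hw.1 i).2
    · exact mul_nonpos_of_nonneg_of_nonpos (hw.1 i).1 (sub_nonpos.2 (hle i hi))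
  have hsum : ∑ i, w i * c i - k * t ≤ ∑ i ∈ K, c i - k * t :=
    calc ∑ i, w i * c i - k * t = ∑ i, w i * (c i - t) := by
          simp only [mul_sub, sum_sub_distrib, ← sum_mul, hw.2]
      _ ≤ ∑ i, if i ∈ K then c i - t else 0 := sum_le_sum fun i _ ↦ hterm i
      _ = ∑ i ∈ K, c i - k * t := by
          rw [sum_ite_mem, univ_inter, sum_sub_distrib, sum_const, hcard, nsmul_eq_mul]
  exact (sub_le_sub_iff_right _).1 hsum

theorem hypersimplex_subset_convexHull_indicator (ι : Type*) [Fintype ι] (k : ℕ) :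
    hypersimplex ℝ ι k ⊆
      convexHull ℝ ((fun K : Finset ι ↦ (K : Set ι).indicator 1) '' {K | #K = k}) := by
  classical
  intro w hw
  by_contra hnot
  obtain ⟨f, u, hlt, hgt⟩ := geometric_hahn_banach_closed_point (convex_convexHull ℝ _)
    (((Set.toFinite {K : Finset ι | #K = k}).image _).isClosed_convexHull ℝ) hnot
  obtain ⟨c, hf⟩ : ∃ c : ι → ℝ, ∀ x, f x = ∑ i, x i * c i :=
    ⟨_, f.toLinearMap.pi_apply_eq_sum_univ⟩
  obtain ⟨K, hcard, hle⟩ := exists_card_eq_sum_mul_le hw c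
  have hfK : f ((K : Set ι).indicator 1) = ∑ i ∈ K, c i := by
    simp [hf, Set.indicator_apply]
  have hfw : f w ≤ f ((K : Set ι).indicator 1) := by rwa [hf w, hfK]
  exact absurd (hlt _ (subset_convexHull ℝ _ ⟨K, hcard, rfl⟩)) (hgt.trans_le hfw).not_gt

-- Dividing by `φ` is a central projection onto the hyperplane `φ = 1`, which preserves segments.
theorem inv_smul_mem_convexHull_image {𝕜 E : Type*} [Field 𝕜] [LinearOrder 𝕜]
    [IsStrictOrderedRing 𝕜] [AddCommGroup E] [Module 𝕜 E] (φ : E →ₗ[𝕜] 𝕜) {A : Set E}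
    (hA : ∀ a ∈ A, 0 < φ a) {y : E} (hy : y ∈ convexHull 𝕜 A) :
    (φ y)⁻¹ • y ∈ convexHull 𝕜 ((fun a ↦ (φ a)⁻¹ • a) '' A) := by
  set C := convexHull 𝕜 ((fun a ↦ (φ a)⁻¹ • a) '' A)
  suffices h : convexHull 𝕜 A ⊆ {x | 0 < φ x ∧ (φ x)⁻¹ • x ∈ C} from (h hy).2
  refine convexHull_min (fun a ha ↦ ⟨hA a ha, subset_convexHull 𝕜 _ ⟨a, ha, rfl⟩⟩) ?_
  rintro x ⟨hx, hxC⟩ z ⟨hz, hzC⟩ a b ha hb hab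
  have hφ : φ (a • x + b • z) = a * φ x + b * φ z := by simp
  have hpos : 0 < a * φ x + b * φ z := convex_Ioi (0 : 𝕜) hx hz ha hb hab
  refine ⟨hφ ▸ hpos, ?_⟩
  have hcomb : (φ (a • x + b • z))⁻¹ • (a • x + b • z) =
      (a * φ x / (a * φ x + b * φ z)) • (φ x)⁻¹ • x +
        (b * φ z / (a * φ x + b * φ z)) • (φ z)⁻¹ • z := by
    rw [hφ]
    match_scalars <;> field_simp
  rw [hcomb]
  exact convex_convexHull 𝕜 _ hxC hzC (by positivity) (by positivity)
    (by rw [← add_div, div_self hpos.ne'])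

theorem sum_mul_indicator_one {ι R : Type*} [Fintype ι] [NonAssocSemiring R] (x : ι → R)
    (K : Finset ι) : ∑ i, (x * (K : Set ι).indicator (1 : ι → R) : ι → R) i = ∑ i ∈ K, x i := by
  classical
  simp [Set.indicator_apply]

theorem menuDist_eq_inv_smul {n : ℕ} (s : (Fin n → ℝ) → Fin n → ℝ) (v : Fin n → ℝ)
    (K : Finset (Fin n)) :
    menuDist s v K = (∑ i ∈ K, s v i)⁻¹ • (s v * (K : Set (Fin n)).indicator 1) := by
  ext i
  simp [menuDist, Set.indicator_apply, div_eq_inv_mul]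

section Menus

variable {n k : ℕ} {s : (Fin n → ℝ) → Fin n → ℝ} {v q : Fin n → ℝ}

theorem inv_smul_mem_IRD (hk : 0 < k) (hs : ∀ i, 0 < s v i) {w : Fin n → ℝ}
    (hw : w ∈ hypersimplex ℝ (Fin n) k) :
    (∑ i, s v i * w i)⁻¹ • (s v * w) ∈ IRD k s v := by
  let T : (Fin n → ℝ) →ₗ[ℝ] Fin n → ℝ := LinearMap.mulLeft ℝ (s v)
  let φ : (Fin n → ℝ) →ₗ[ℝ] ℝ := ∑ i, LinearMap.proj i
  have hφ (x : Fin n → ℝ) : φ x = ∑ i, x i := by simp [φ]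
  have hφK (K : Finset (Fin n)) : φ (T ((K : Set (Fin n)).indicator 1)) = ∑ i ∈ K, s v i :=
    (hφ _).trans (sum_mul_indicator_one _ _)
  set A := T '' ((fun K : Finset (Fin n) ↦ (K : Set (Fin n)).indicator 1) '' {K | #K = k})
  have hpos : ∀ a ∈ A, 0 < φ a := by
    rintro _ ⟨_, ⟨K, hK, rfl⟩, rfl⟩
    rw [hφK]
    exact sum_pos (fun i _ ↦ hs i) (card_pos.1 (hK.symm ▸ hk))
  have hmem : T w ∈ convexHull ℝ A := by
    rw [← T.image_convexHull]
    exact ⟨w, hypersimplex_subset_convexHull_indicator _ k hw, rfl⟩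
  have hproj := inv_smul_mem_convexHull_image φ hpos hmem
  rw [hφ] at hproj
  refine convexHull_mono ?_ hproj
  rintro _ ⟨_, ⟨_, ⟨K, hK, rfl⟩, rfl⟩, rfl⟩
  refine ⟨K, hK, ?_⟩
  rw [menuDist_eq_inv_smul, ← hφK]
  rfl

theorem mem_IRD_of_mul_div_le_sum (hk : 0 < k) (hs : ∀ i, 0 < s v i)
    (hq : q ∈ stdSimplex ℝ (Fin n)) (hle : ∀ i, k * (q i / s v i) ≤ ∑ j, q j / s v j) :
    q ∈ IRD k s v := by
  set Y := ∑ j, q j / s v j with hY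
  have hdiv (i : Fin n) : 0 ≤ q i / s v i := div_nonneg (hq.1 i) (hs i).le
  have hYpos : 0 < Y := by
    obtain ⟨i, -, hi⟩ := exists_lt_of_sum_lt (s := univ) (f := 0) (g := q) (by simp [hq.2])
    exact sum_pos' (fun j _ ↦ hdiv j) ⟨i, mem_univ i, div_pos hi (hs i)⟩
  have hw : (fun i ↦ k * (q i / s v i) / Y) ∈ hypersimplex ℝ (Fin n) k := by
    refine ⟨fun i ↦ ⟨?_, div_le_one_of_le₀ (hle i) hYpos.le⟩, ?_⟩
    · have := hdiv i
      positivity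
    · rw [← sum_div, ← mul_sum, ← hY, mul_div_cancel_right₀ _ hYpos.ne']
  have hscore (i : Fin n) : s v i * (k * (q i / s v i) / Y) = k / Y * q i := by
    have := (hs i).ne'
    field_simp
  convert inv_smul_mem_IRD hk hs hw using 1
  ext i
  simp only [Pi.smul_apply, Pi.mul_apply, smul_eq_mul, hscore, ← mul_sum, hq.2, mul_one]
  field_simp

theorem uniform_mem_IRD_general (hk : 0 < k) {lam : ℝ} (hlam : 0 < lam)
    (hs : ∀ i, lam ≤ s v i ∧ s v i ≤ 1) (hq : q ∈ stdSimplex ℝ (Fin n))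
    (hqlam : ∀ i, k * q i ≤ lam) : q ∈ IRD k s v := by
  have hpos (i : Fin n) : 0 < s v i := hlam.trans_le (hs i).1
  refine mem_IRD_of_mul_div_le_sum hk hpos hq fun i ↦ ?_
  calc k * (q i / s v i) = k * q i / s v i := (mul_div_assoc _ _ _).symm
    _ ≤ 1 := div_le_one_of_le₀ ((hqlam i).trans (hs i).1) (hpos i).le
    _ = ∑ j, q j := hq.2.symm
    _ ≤ ∑ j, q j / s v j :=
      sum_le_sum fun j _ ↦ le_div_self (hq.1 j) (hpos j) (hs j).2

end Menus

theorem const_one_div_mem_stdSimplex {𝕜 : Type*} [Field 𝕜] [LinearOrder 𝕜]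
    [IsStrictOrderedRing 𝕜] {n : ℕ} (hn : n ≠ 0) :
    (fun _ ↦ (1 : 𝕜) / n) ∈ stdSimplex 𝕜 (Fin n) :=
  ⟨fun _ ↦ by positivity, by simp [hn]⟩

theorem natCast_mul_one_div_le_sq_div {𝕜 : Type*} [Field 𝕜] [LinearOrder 𝕜]
    [IsStrictOrderedRing 𝕜] (k n : ℕ) : (k : 𝕜) * (1 / n) ≤ (k : 𝕜) ^ 2 / n := by
  rw [mul_one_div]
  gcongr
  exact_mod_cast Nat.le_self_pow two_ne_zero k

/-- For a `λ`-dispersed preference model with `λ ≥ k²/n`, the uniform vector lies in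
`IRD(v)` for every memory vector `v`; in particular it lies in `EIRD`. -/
theorem uniform_mem_IRD {n k : ℕ} (hk : 2 ≤ k) (hkn : k ≤ n)
    (lam : ℝ) (hlam0 : 0 < lam) (hlam1 : lam ≤ 1)
    (hlamn : (k : ℝ) ^ 2 / n ≤ lam)
    (s : (Fin n → ℝ) → Fin n → ℝ)
    (hdisp : ∀ v ∈ stdSimplex ℝ (Fin n), ∀ i, lam ≤ s v i ∧ s v i ≤ 1) :
    ∀ v ∈ stdSimplex ℝ (Fin n),
      (fun _ : Fin n => (1 : ℝ) / n) ∈ IRD k s v := by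
  exact fun v hv ↦ uniform_mem_IRD_general (by omega) hlam0 (hdisp v hv)
    (const_one_div_mem_stdSimplex (by omega))
    fun _ ↦ (natCast_mul_one_div_le_sq_div k n).trans hlamn
end

section
/- There exists an absolute constant C₀ > 0 with the following property. Let n ≥ k ≥ 2 be integers, let γ > 0, let τ ≥ e^{−γ}, and let λ ∈ (0,1] satisfy λ ≥ (k² e^{γ/τ})/n. Let s be a λ-dispersed preference model on n items. Then for every v ∈ Δ(n) with Shannon entropy H(v) ≥ log n − γ, there exists v' ∈ EIRD with d_TV(v, v') ≤ C₀ τ. -/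
open Finset

/-- The everywhere instantaneously realizable distributions: the intersection of
`IRD(v)` over all memory vectors `v` in the simplex. -/
noncomputable def EIRD {n : ℕ} (k : ℕ) (s : (Fin n → ℝ) → Fin n → ℝ) :
    Set (Fin n → ℝ) :=
  ⋂ v ∈ stdSimplex ℝ (Fin n), IRD k s v

/-!
A point `x` of the simplex is a mixture of the menu distributions at `v` as soon as the weights
`x i / s v i`, rescaled to have sum `k`, are all at most `1`: such weights form a convex combination
of indicators of `k`-subsets, and multiplying by the scores sends the indicator of `K` to a positive
multiple of the menu distribution of `K`. For a `lam`-dispersed model this covers every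
distribution with all entries at most `lam / k`, whatever `v` is.

It remains to cap `v` at `exp a / n` with `a = γ / τ`, pouring the excess `∑ i, (v i - exp a / n)⁺`
into the entries below the cap; this moves `v` by exactly the excess in total variation. The
inequality `a * (t - exp a)⁺ ≤ t * log t + 1 - t`, taken at `t = n * v i` and summed, bounds
`a` times the excess by `log n - H(v) ≤ γ`, so the excess is at most `γ / a = τ`.
-/

open InformationTheory

/-- A `lam`-dispersed preference model: all its scores lie in `[lam, 1]`. Only memory vectors in
the simplex are constrained, since `s` is a total function on `Fin n → ℝ`. -/
def IsDispersed {n : ℕ} (lam : ℝ) (s : (Fin n → ℝ) → Fin n → ℝ) : Prop :=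
  ∀ v ∈ stdSimplex ℝ (Fin n), ∀ i, lam ≤ s v i ∧ s v i ≤ 1

lemma exists_pos_of_mem_stdSimplex {ι R : Type*} [Fintype ι] [Ring R] [LinearOrder R]
    [IsStrictOrderedRing R] {x : ι → R} (hx : x ∈ stdSimplex R ι) : ∃ i, 0 < x i := by
  obtain ⟨i, -, hi⟩ : ∃ i ∈ univ, 0 < x i := exists_lt_of_sum_lt (by simp [hx.2])
  exact ⟨i, hi⟩

section Hypersimplex

variable {ι : Type*} [Fintype ι]

lemma exists_card_eq_forall_mem_forall_notMem_le {α : Type*} [LinearOrder α] (d : ι → α) {k : ℕ}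
    (hk : k ≤ Fintype.card ι) :
    ∃ K : Finset ι, #K = k ∧ ∀ i ∈ K, ∀ j ∉ K, d j ≤ d i := by
  classical
  induction k with
  | zero => exact ⟨∅, by simp⟩
  | succ k ih =>
    obtain ⟨K, hK, hd⟩ := ih (by lia)
    have hne : Kᶜ.Nonempty := by
      rw [← card_pos, card_compl]
      lia
    obtain ⟨a, ha, hmax⟩ := exists_max_image Kᶜ d hne
    rw [mem_compl] at ha
    refine ⟨insert a K, by rw [card_insert_of_notMem ha, hK], fun i hi j hj => ?_⟩
    rw [mem_insert, not_or] at hj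
    rcases mem_insert.1 hi with rfl | hi
    · exact hmax j (mem_compl.2 hj.2)
    · exact hd i hi j hj.2

lemma exists_card_eq_sum_mul_le_sum {R : Type*} [CommRing R] [LinearOrder R]
    [IsStrictOrderedRing R] {w : ι → R} {k : ℕ} (hw : w ∈ Set.Icc 0 1) (hsum : ∑ i, w i = k)
    (d : ι → R) :
    ∃ K : Finset ι, #K = k ∧ ∑ i, w i * d i ≤ ∑ i ∈ K, d i := by
  classical
  have hk : k ≤ Fintype.card ι := by
    have h : ∑ i, w i ≤ ∑ _i : ι, (1 : R) := sum_le_sum fun i _ => hw.2 i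
    rw [hsum, sum_const, nsmul_one] at h
    exact_mod_cast h
  obtain ⟨K, hK, hd⟩ := exists_card_eq_forall_mem_forall_notMem_le d hk
  refine ⟨K, hK, ?_⟩
  rcases K.eq_empty_or_nonempty with rfl | hne
  · have hw0 : ∀ i, w i = 0 := by
      rw [← hK, card_empty, Nat.cast_zero, sum_eq_zero_iff_of_nonneg fun i _ => hw.1 i] at hsum
      exact fun i => hsum i (mem_univ i)
    simp [hw0]
  · obtain ⟨a, ha, hmin⟩ := exists_min_image K d hne
    have hpoint : ∀ i, w i * (d i - d a) ≤ if i ∈ K then d i - d a else 0 := fun i => by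
      split_ifs with hi
      · exact mul_le_of_le_one_left (sub_nonneg.2 (hmin i hi)) (hw.2 i)
      · exact mul_nonpos_of_nonneg_of_nonpos (hw.1 i) (sub_nonpos.2 (hd a ha i hi))
    have htotal : ∑ i, w i * (d i - d a) ≤ ∑ i ∈ K, (d i - d a) := by
      simpa only [sum_ite_mem, univ_inter] using sum_le_sum fun i (_ : i ∈ univ) => hpoint i
    simp only [mul_sub, sum_sub_distrib, ← sum_mul, hsum, sum_const, hK, nsmul_eq_mul] at htotal
    exact (sub_le_sub_iff_right _).1 htotal

lemma mem_convexHull_indicator_of_sum_eq {w : ι → ℝ} {k : ℕ} (hw : w ∈ Set.Icc 0 1)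
    (hsum : ∑ i, w i = k) :
    w ∈ convexHull ℝ {x | ∃ K : Finset ι, #K = k ∧ x = Set.indicator K 1} := by
  classical
  by_contra hmem
  have hfin : {x : ι → ℝ | ∃ K : Finset ι, #K = k ∧ x = Set.indicator K 1}.Finite :=
    (Set.finite_range fun K : Finset ι => Set.indicator (K : Set ι) (1 : ι → ℝ)).subset
      fun _ ⟨K, _, hx⟩ => ⟨K, hx.symm⟩
  obtain ⟨f, u, hf, hfw⟩ := geometric_hahn_banach_closed_point (convex_convexHull ℝ _)
    (hfin.isClosed_convexHull ℝ) hmem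
  have hcoord : ∀ x : ι → ℝ, f x = ∑ i, x i * f (Pi.single i 1) := fun x => by
    conv_lhs => rw [pi_eq_sum_univ' x, map_sum]
    exact sum_congr rfl fun i _ => map_smul f (x i) (Pi.single i 1)
  obtain ⟨K, hK, hle⟩ := exists_card_eq_sum_mul_le_sum hw hsum fun i => f (Pi.single i 1)
  have hvertex : f (Set.indicator K 1) = ∑ i ∈ K, f (Pi.single i 1) :=
    (hcoord _).trans (by simp [Set.indicator_apply])
  have hlt := (hf _ (subset_convexHull ℝ _ ⟨K, hK, rfl⟩)).trans hfw
  rw [hvertex, hcoord w] at hlt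
  exact hlt.not_ge hle

end Hypersimplex

section Realizable

variable {n k : ℕ} {s : (Fin n → ℝ) → Fin n → ℝ} {v x : Fin n → ℝ}

lemma sum_smul_menuDist {K : Finset (Fin n)} (hK : ∑ i ∈ K, s v i ≠ 0) :
    (∑ i ∈ K, s v i) • menuDist s v K = s v * Set.indicator K 1 := by
  ext i
  by_cases hi : i ∈ K <;> simp [menuDist, hi, mul_div_cancel₀, hK]

lemma menuDist_mem_stdSimplex {K : Finset (Fin n)} (hs : ∀ i, 0 < s v i) (hK : K.Nonempty) :
    menuDist s v K ∈ stdSimplex ℝ (Fin n) := by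
  have hpos : 0 < ∑ i ∈ K, s v i := sum_pos (fun i _ => hs i) hK
  refine ⟨fun i => ?_, ?_⟩
  · unfold menuDist
    split_ifs
    exacts [div_nonneg (hs i).le hpos.le, le_rfl]
  · simp only [menuDist, sum_ite_mem, univ_inter, ← sum_div, div_self hpos.ne']

lemma IRD_subset_stdSimplex (hk : 1 ≤ k) (hs : ∀ i, 0 < s v i) :
    IRD k s v ⊆ stdSimplex ℝ (Fin n) := by
  refine convexHull_min ?_ (convex_stdSimplex ℝ _)
  rintro _ ⟨K, hK, rfl⟩
  exact menuDist_mem_stdSimplex hs (card_pos.1 (by lia))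

lemma mul_mem_hull_IRD (hk : 1 ≤ k) (hs : ∀ i, 0 < s v i) {w : Fin n → ℝ}
    (hw : w ∈ Set.Icc 0 1) (hsum : ∑ i, w i = k) :
    s v * w ∈ ConvexCone.hull ℝ (IRD k s v) := by
  let C := (ConvexCone.hull ℝ (IRD k s v)).comap (LinearMap.mulLeft ℝ (s v))
  suffices hsub : {x : Fin n → ℝ | ∃ K : Finset (Fin n), #K = k ∧ x = Set.indicator K 1} ⊆ C by
    have hwC : w ∈ C :=
      convexHull_min hsub C.convex (mem_convexHull_indicator_of_sum_eq hw hsum)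
    exact hwC
  rintro _ ⟨K, hK, rfl⟩
  have hpos : 0 < ∑ i ∈ K, s v i := sum_pos (fun i _ => hs i) (card_pos.1 (by lia))
  change s v * Set.indicator K 1 ∈ ConvexCone.hull ℝ (IRD k s v)
  rw [← sum_smul_menuDist hpos.ne']
  exact ConvexCone.smul_mem _ hpos
    (ConvexCone.subset_hull (subset_convexHull ℝ _ ⟨K, hK, rfl⟩))

lemma mem_IRD_of_mul_div_le_sum_div (hk : 1 ≤ k) (hs : ∀ i, 0 < s v i)
    (hx : x ∈ stdSimplex ℝ (Fin n)) (hcap : ∀ i, k * (x i / s v i) ≤ ∑ j, x j / s v j) :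
    x ∈ IRD k s v := by
  have hdiv : ∀ i, 0 ≤ x i / s v i := fun i => div_nonneg (hx.1 i) (hs i).le
  set Y := ∑ j, x j / s v j with hY
  have hYpos : 0 < Y := by
    obtain ⟨i, hi⟩ := exists_pos_of_mem_stdSimplex hx
    exact sum_pos' (fun j _ => hdiv j) ⟨i, mem_univ i, div_pos hi (hs i)⟩
  have hk0 : (0 : ℝ) < k := by exact_mod_cast hk
  let w : Fin n → ℝ := fun i => k * (x i / s v i) / Y
  have hw : w ∈ Set.Icc 0 1 :=
    ⟨fun i => div_nonneg (mul_nonneg hk0.le (hdiv i)) hYpos.le,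
      fun i => (div_le_one hYpos).2 (hcap i)⟩
  have hsum : ∑ i, w i = k := by
    simp only [w, ← sum_div, ← mul_sum, ← hY, mul_div_cancel_right₀ _ hYpos.ne']
  obtain ⟨c, hc, y, hy, hcy⟩ := (ConvexCone.mem_hull_of_convex (convex_convexHull ℝ _)).1
    (mul_mem_hull_IRD hk hs hw hsum)
  have hscale : ∀ i, c * y i = k / Y * x i := fun i => by
    have hi : c * y i = s v i * (k * (x i / s v i) / Y) := congrFun hcy i
    rw [hi]
    field_simp [(hs i).ne']
  have hcoef : c = k / Y := by
    have h := sum_congr rfl fun i (_ : i ∈ univ) => hscale i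
    rwa [← mul_sum, ← mul_sum, (IRD_subset_stdSimplex hk hs hy).2, hx.2, mul_one, mul_one] at h
  have hyx : y = x := funext fun i =>
    mul_left_cancel₀ hc.ne' ((hscale i).trans (by rw [hcoef]))
  exact hyx ▸ hy

lemma mem_EIRD_of_mul_le {lam : ℝ} (hk : 1 ≤ k) (hlam : 0 < lam) (hs : IsDispersed lam s)
    (hx : x ∈ stdSimplex ℝ (Fin n)) (hcap : ∀ i, k * x i ≤ lam) :
    x ∈ EIRD k s := by
  refine Set.mem_iInter₂.2 fun v hv => ?_
  have hpos : ∀ i, 0 < s v i := fun i => hlam.trans_le (hs v hv i).1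
  refine mem_IRD_of_mul_div_le_sum_div hk hpos hx fun i => ?_
  calc k * (x i / s v i) = k * x i / s v i := (mul_div_assoc _ _ _).symm
    _ ≤ 1 := (div_le_one (hpos i)).2 ((hcap i).trans (hs v hv i).1)
    _ = ∑ j, x j := hx.2.symm
    _ ≤ ∑ j, x j / s v j := sum_le_sum fun j _ => le_div_self (hx.1 j) (hpos j) (hs v hv j).2

end Realizable

lemma exists_mem_stdSimplex_le_sum_abs_sub_le {ι R : Type*} [Fintype ι] [Field R] [LinearOrder R]
    [IsStrictOrderedRing R] {v : ι → R} {b : R} (hv : v ∈ stdSimplex R ι)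
    (hb : 1 ≤ Fintype.card ι * b) :
    ∃ w ∈ stdSimplex R ι, (∀ i, w i ≤ b) ∧ ∑ i, |v i - w i| ≤ 2 * ∑ i, (v i - b)⁺ := by
  -- When `d = 0` also `e = 0`, so the junk value of the filling ratio `e / d` is harmless.
  set e := ∑ i, (v i - b)⁺ with he
  set d := ∑ i, (v i - b)⁻ with hd
  have hb0 : 0 ≤ b := (pos_of_mul_pos_right (one_pos.trans_le hb) (Nat.cast_nonneg _)).le
  have he0 : 0 ≤ e := sum_nonneg fun i _ => posPart_nonneg _
  have hd0 : 0 ≤ d := sum_nonneg fun i _ => negPart_nonneg _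
  have hed : e ≤ d := by
    have h : e - d = 1 - Fintype.card ι * b := by
      simp only [he, hd, ← sum_sub_distrib, posPart_sub_negPart]
      rw [sum_sub_distrib, hv.2, sum_const, card_univ, nsmul_eq_mul]
    linarith
  have hfill : e / d * d = e := div_mul_cancel_of_imp fun h => le_antisymm (h ▸ hed) he0
  have hratio : 0 ≤ e / d := div_nonneg he0 hd0
  refine ⟨fun i => v i - (v i - b)⁺ + e / d * (v i - b)⁻, ⟨fun i => ?_, ?_⟩, fun i => ?_, ?_⟩
  · have hinf : 0 ≤ v i - (v i - b)⁺ := inf_eq_sub_posPart_sub (v i) b ▸ le_inf (hv.1 i) hb0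
    exact add_nonneg hinf (mul_nonneg hratio (negPart_nonneg _))
  · rw [sum_add_distrib, sum_sub_distrib, ← mul_sum, hv.2, ← he, ← hd, hfill, sub_add_cancel]
  · calc v i - (v i - b)⁺ + e / d * (v i - b)⁻
        ≤ v i - (v i - b)⁺ + (v i - b)⁻ := by
          gcongr
          exact mul_le_of_le_one_left (negPart_nonneg _) (div_le_one_of_le₀ hed hd0)
      _ = b := by linarith [posPart_sub_negPart (v i - b)]
  · calc ∑ i, |v i - (v i - (v i - b)⁺ + e / d * (v i - b)⁻)|
        ≤ ∑ i, ((v i - b)⁺ + e / d * (v i - b)⁻) := sum_le_sum fun i _ => by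
          have hp := posPart_nonneg (v i - b)
          have hq := mul_nonneg hratio (negPart_nonneg (v i - b))
          rw [abs_le]
          constructor <;> linarith
      _ = 2 * e := by rw [sum_add_distrib, ← mul_sum, ← he, ← hd, hfill, two_mul]

section Entropy

-- Fenchel–Young inequality: `exp a - 1` is the convex conjugate of `klFun`.
lemma mul_le_klFun_add_exp_sub_one (a : ℝ) {t : ℝ} (ht : 0 ≤ t) :
    a * t ≤ klFun t + (Real.exp a - 1) := by
  rcases ht.eq_or_lt with rfl | ht
  · simp [klFun_zero, (Real.exp_pos a).le]
  · have h : (a - Real.log t + 1) * t ≤ Real.exp a := by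
      rw [← le_div_iff₀ ht]
      simpa only [Real.exp_sub, Real.exp_log ht] using Real.add_one_le_exp (a - Real.log t)
    rw [klFun_apply]
    linarith

lemma mul_posPart_sub_exp_le_klFun (a : ℝ) {t : ℝ} (ht : 0 ≤ t) :
    a * (t - Real.exp a)⁺ ≤ klFun t := by
  have hexp : Real.exp a - 1 ≤ a * Real.exp a := by
    have h := klFun_nonneg (Real.exp_pos a).le
    rw [klFun_apply, Real.log_exp] at h
    linarith
  rcases le_total t (Real.exp a) with h | h
  · rw [posPart_eq_zero.2 (sub_nonpos.2 h), mul_zero]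
    exact klFun_nonneg ht
  · rw [posPart_eq_self.2 (sub_nonneg.2 h)]
    linarith [mul_le_klFun_add_exp_sub_one a ht]

variable {ι : Type*} [Fintype ι] {v : ι → ℝ}

lemma sum_klFun_card_mul (hv : v ∈ stdSimplex ℝ ι) :
    ∑ i, klFun (Fintype.card ι * v i) =
      Fintype.card ι * (Real.log (Fintype.card ι) + ∑ i, v i * Real.log (v i)) := by
  have hterm : ∀ i, klFun (Fintype.card ι * v i) =
      Fintype.card ι * (v i * Real.log (Fintype.card ι) + v i * Real.log (v i))
        + (1 - Fintype.card ι * v i) := fun i => by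
    rcases (hv.1 i).eq_or_lt with h | h
    · simp [← h, klFun_zero]
    · have : Nonempty ι := ⟨i⟩
      rw [klFun_apply, Real.log_mul (Nat.cast_ne_zero.2 Fintype.card_ne_zero) h.ne']
      ring
  simp only [hterm, sum_add_distrib, sum_sub_distrib, ← mul_sum, ← sum_mul, hv.2, sum_const,
    card_univ, nsmul_eq_mul, mul_one, one_mul, sub_self, add_zero]

lemma mul_sum_posPart_sub_le_of_entropy (a : ℝ) {γ : ℝ} (hv : v ∈ stdSimplex ℝ ι)
    (hH : Real.log (Fintype.card ι) - γ ≤ -∑ i, v i * Real.log (v i)) :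
    a * ∑ i, (v i - Real.exp a / Fintype.card ι)⁺ ≤ γ := by
  set N : ℝ := (Fintype.card ι : ℝ)
  have hNpos : 0 < N := by
    obtain ⟨i, -⟩ := exists_pos_of_mem_stdSimplex hv
    exact Nat.cast_pos.2 (Fintype.card_pos_iff.2 ⟨i⟩)
  have hscale : ∀ i, N * (v i - Real.exp a / N)⁺ = (N * v i - Real.exp a)⁺ := fun i => by
    simp only [posPart_def, mul_max_of_nonneg _ _ hNpos.le, mul_zero, mul_sub,
      mul_div_cancel₀ _ hNpos.ne']
  refine le_of_mul_le_mul_left ?_ hNpos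
  calc N * (a * ∑ i, (v i - Real.exp a / N)⁺)
      = ∑ i, a * (N * v i - Real.exp a)⁺ := by
        rw [mul_left_comm, mul_sum, mul_sum]
        simp only [hscale]
    _ ≤ ∑ i, klFun (N * v i) := sum_le_sum fun i _ =>
        mul_posPart_sub_exp_le_klFun a (mul_nonneg hNpos.le (hv.1 i))
    _ = N * (Real.log N + ∑ i, v i * Real.log (v i)) := sum_klFun_card_mul hv
    _ ≤ N * γ := mul_le_mul_of_nonneg_left (by linarith) hNpos.le

end Entropy

theorem highEntropy_close_to_EIRD_general {n k : ℕ} (hk : 1 ≤ k) {γ τ lam : ℝ} (hγ : 0 < γ)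
    (hτ : 0 < τ) (hlam : k * Real.exp (γ / τ) / n ≤ lam) {s : (Fin n → ℝ) → Fin n → ℝ}
    (hs : IsDispersed lam s) {v : Fin n → ℝ} (hv : v ∈ stdSimplex ℝ (Fin n))
    (hH : Real.log n - γ ≤ -∑ i, v i * Real.log (v i)) :
    ∃ v' ∈ EIRD k s, (1 / 2) * ∑ i, |v i - v' i| ≤ τ := by
  have hn : (0 : ℝ) < n := by
    obtain ⟨i, -⟩ := exists_pos_of_mem_stdSimplex hv
    exact Nat.cast_pos.2 i.pos
  have hk0 : (0 : ℝ) < k := Nat.cast_pos.2 hk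
  have hratio : 0 < γ / τ := div_pos hγ hτ
  have hlam0 : 0 < lam := lt_of_lt_of_le (by positivity) hlam
  have hexcess : ∑ i, (v i - Real.exp (γ / τ) / n)⁺ ≤ τ := by
    have h := mul_sum_posPart_sub_le_of_entropy (γ / τ) hv (by simpa using hH)
    rw [Fintype.card_fin] at h
    exact le_of_mul_le_mul_left (h.trans_eq (div_mul_cancel₀ γ hτ.ne').symm) hratio
  have hcap : 1 ≤ Fintype.card (Fin n) * (Real.exp (γ / τ) / n) := by
    rw [Fintype.card_fin, mul_div_cancel₀ _ hn.ne']
    exact Real.one_le_exp hratio.le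
  obtain ⟨w, hw, hwcap, hdist⟩ := exists_mem_stdSimplex_le_sum_abs_sub_le hv hcap
  refine ⟨w, mem_EIRD_of_mul_le hk hlam0 hs hw fun i => ?_, by linarith⟩
  calc k * w i ≤ k * (Real.exp (γ / τ) / n) := mul_le_mul_of_nonneg_left (hwcap i) hk0.le
    _ ≤ lam := by rwa [← mul_div_assoc]

/-- High-entropy containment in `EIRD`: there is an absolute constant `C₀ > 0` such that
for every `λ`-dispersed preference model with `λ ≥ k² e^{γ/τ} / n` (where `τ ≥ e^{−γ}`),
every distribution `v` with Shannon entropy at least `log n − γ` is within total variation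
distance `C₀ τ` of some point of `EIRD`. -/
theorem highEntropy_close_to_EIRD :
    ∃ C₀ : ℝ, 0 < C₀ ∧
      ∀ (n k : ℕ), 2 ≤ k → k ≤ n →
      ∀ γ τ lam : ℝ, 0 < γ → Real.exp (-γ) ≤ τ →
        0 < lam → lam ≤ 1 → (k : ℝ) ^ 2 * Real.exp (γ / τ) / n ≤ lam →
      ∀ s : (Fin n → ℝ) → Fin n → ℝ,
        (∀ v ∈ stdSimplex ℝ (Fin n), ∀ i, lam ≤ s v i ∧ s v i ≤ 1) →
      ∀ v ∈ stdSimplex ℝ (Fin n),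
        Real.log n - γ ≤ -∑ i, v i * Real.log (v i) →
        ∃ v' ∈ EIRD k s, (1 / 2) * ∑ i, |v i - v' i| ≤ C₀ * τ := by
  refine ⟨1, one_pos, fun n k hk _ γ τ lam hγ hτ _ _ hlam s hs v hv hH => ?_⟩
  have hlam' : k * Real.exp (γ / τ) / n ≤ lam := by
    refine le_trans ?_ hlam
    gcongr
    exact_mod_cast Nat.le_self_pow two_ne_zero k
  simpa only [one_mul] using highEntropy_close_to_EIRD_general (by lia) hγ
    ((Real.exp_pos _).trans_le hτ) hlam' hs hv hH
end

section
/- Let n ≥ 1, let i_1, …, i_T be a sequence of items with empirical distributions v_1, …, v_T, and let v, v' ∈ Δ(n). If v_t = v and v_{t'} = v' for some 1 ≤ t ≤ t' ≤ T, then t' ≥ t · (1 + d_max(v, v')). -/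
open Finset

/-- The empirical distribution after `t` rounds of the item sequence `it`
(round `r`, for `1 ≤ r ≤ t`, selects item `it (r-1)`). -/
noncomputable def emp {n : ℕ} (it : ℕ → Fin n) (t : ℕ) : Fin n → ℝ :=
  fun j => (∑ r ∈ Finset.range t, if it r = j then (1 : ℝ) else 0) / t

/-- `d_max(v, v') = max_i (v_i − v'_i)`. -/
noncomputable def dmax {n : ℕ} (v v' : Fin n → ℝ) : ℝ :=
  ⨆ i, (v i - v' i)

section

variable {n : ℕ} (it : ℕ → Fin n)

lemma emp_eq_count_div (t : ℕ) (j : Fin n) :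
    emp it t j = (Nat.count (it · = j) t : ℝ) / t := by
  rw [emp, sum_boole, Nat.count_eq_card_filter_range]

lemma mul_emp_eq_count (t : ℕ) (j : Fin n) :
    (t : ℝ) * emp it t j = Nat.count (it · = j) t := by
  rw [emp_eq_count_div]
  refine mul_div_cancel_of_imp' fun ht => ?_
  rw [Nat.cast_eq_zero.mp ht, Nat.count_zero, Nat.cast_zero]

lemma monotone_mul_emp (j : Fin n) :
    Monotone fun t : ℕ => (t : ℝ) * emp it t j := by
  simp only [mul_emp_eq_count]
  exact Nat.mono_cast.comp (Nat.count_monotone (it · = j))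

lemma emp_le_one (t : ℕ) (j : Fin n) : emp it t j ≤ 1 := by
  rw [emp_eq_count_div]
  exact div_le_one_of_le₀ (Nat.cast_le.mpr (Nat.count_le _)) t.cast_nonneg

lemma mul_emp_sub_emp_le {t t' : ℕ} (htt' : t ≤ t') (j : Fin n) :
    (t : ℝ) * (emp it t j - emp it t' j) ≤ t' - t := by
  have elapsed_nonneg : (0 : ℝ) ≤ t' - t := sub_nonneg.mpr (Nat.cast_le.mpr htt')
  calc (t : ℝ) * (emp it t j - emp it t' j)
      = t * emp it t j - t * emp it t' j := mul_sub ..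
    _ ≤ t' * emp it t' j - t * emp it t' j := sub_le_sub_right (monotone_mul_emp it j htt') _
    _ = (t' - t) * emp it t' j := (sub_mul ..).symm
    _ ≤ t' - t := mul_le_of_le_one_right elapsed_nonneg (emp_le_one it t' j)

lemma mul_dmax_emp_le {t t' : ℕ} (htt' : t ≤ t') :
    (t : ℝ) * dmax (emp it t) (emp it t') ≤ t' - t := by
  rw [dmax, Real.mul_iSup_of_nonneg t.cast_nonneg]
  exact Real.iSup_le (mul_emp_sub_emp_le it htt') (sub_nonneg.mpr (Nat.cast_le.mpr htt'))

end

/-- If the empirical distribution equals `v` at time `t ≥ 1` and `v'` at a later time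
`t' ≥ t`, then `t' ≥ t · (1 + d_max(v, v'))`. -/
theorem emp_time_lower_bound {n : ℕ} (hn : 1 ≤ n) (it : ℕ → Fin n)
    (T t t' : ℕ) (ht : 1 ≤ t) (htt' : t ≤ t') (ht'T : t' ≤ T)
    (v v' : Fin n → ℝ) (hv : emp it t = v) (hv' : emp it t' = v') :
    (t : ℝ) * (1 + dmax v v') ≤ (t' : ℝ) := by
  subst hv hv'
  calc (t : ℝ) * (1 + dmax (emp it t) (emp it t'))
      = t + t * dmax (emp it t) (emp it t') := mul_one_add ..
    _ ≤ t + (t' - t) := by gcongr; exact mul_dmax_emp_le it htt'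
    _ = t' := add_sub_cancel ..
end

section
/- Let n ≥ 1 and let S be a finite nonempty subset of Δ(n). Let i_1, …, i_T be any sequence of items such that for every v ∈ S there exists some t ∈ {1,…,T} with v_t = v (i.e., every point of S is realized as an empirical distribution at some time). Then T ≥ min_{σ} ∏_{i=1}^{|S|−1} (1 + d_max(σ(i), σ(i+1))), where the minimum is over all bijections σ from {1,…,|S|} to S. -/
open Finset

/-! The counts `t • v_t` never decrease, so for `s ≤ t` every coordinate satisfies
`s * (v_s i - v_t i) ≤ (t - s) * v_t i ≤ t - s`, that is `s * (1 + d_max(v_s, v_t)) ≤ t`.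
Visiting `S` in order of realization times `τ 0 < τ 1 < ⋯`, this telescopes to
`∏ (1 + d_max) ≤ τ (|S| - 1) ≤ T`. -/

section Ordering

variable {α β : Type*} [LinearOrder α] [Nonempty α]

lemma exists_strictMonoOn_bijOn_Iio_card (s : Finset α) :
    ∃ τ : ℕ → α, StrictMonoOn τ (Set.Iio #s) ∧ Set.BijOn τ (Set.Iio #s) s := by
  let τ : ℕ → α := Function.extend Fin.val (s.orderEmbOfFin rfl) fun _ => Classical.arbitrary α
  have hτ (i : Fin #s) : τ i = s.orderEmbOfFin rfl i := Fin.val_injective.extend_apply _ _ i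
  have hmono : StrictMonoOn τ (Set.Iio #s) := fun i hi j hj hij => by
    rw [hτ ⟨i, hi⟩, hτ ⟨j, hj⟩]
    exact (s.orderEmbOfFin rfl).strictMono hij
  refine ⟨τ, hmono, fun i hi => ?_, hmono.injOn, fun a ha => ?_⟩
  · rw [hτ ⟨i, hi⟩]
    exact s.orderEmbOfFin_mem rfl _
  · obtain ⟨i, rfl⟩ := (s.range_orderEmbOfFin rfl).superset ha
    exact ⟨i, i.isLt, hτ i⟩

lemma exists_strictMonoOn_bijOn_comp_of_surjOn {f : α → β} {s : Set α} {t : Finset β}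
    (hf : Set.SurjOn f s t) :
    ∃ τ : ℕ → α, StrictMonoOn τ (Set.Iio #t) ∧ Set.MapsTo τ (Set.Iio #t) s ∧
      Set.BijOn (f ∘ τ) (Set.Iio #t) t := by
  classical
  obtain ⟨u, hus, hinj, rfl⟩ := exists_subset_injOn_image_eq_of_surjOn s t hf
  obtain ⟨τ, hmono, hbij⟩ := exists_strictMonoOn_bijOn_Iio_card u
  rw [card_image_of_injOn hinj, coe_image]
  exact ⟨τ, hmono, hbij.mapsTo.mono_right hus, hinj.bijOn_image.comp hbij⟩

end Ordering

lemma prod_range_le_of_mul_le {R : Type*} [CommMonoidWithZero R] [Preorder R] [MulPosMono R]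
    {f g : ℕ → R} {k : ℕ} (hf : 1 ≤ f 0) (hg : ∀ j < k, 0 ≤ g j)
    (hfg : ∀ j < k, f j * g j ≤ f (j + 1)) : ∏ j ∈ range k, g j ≤ f k := by
  induction k with
  | zero => simpa using hf
  | succ k ih =>
    calc ∏ j ∈ range (k + 1), g j = (∏ j ∈ range k, g j) * g k := prod_range_succ g k
      _ ≤ f k * g k := mul_le_mul_of_nonneg_right
        (ih (fun j hj => hg j (by omega)) fun j hj => hfg j (by omega)) (hg k k.lt_succ_self)
      _ ≤ f (k + 1) := hfg k k.lt_succ_self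

section Dmax

variable {n : ℕ} [Nonempty (Fin n)] {v v' : Fin n → ℝ}

lemma dmax_nonneg_of_sum_le (h : ∑ i, v' i ≤ ∑ i, v i) : 0 ≤ dmax v v' := by
  obtain ⟨i, -, hi⟩ := exists_le_of_sum_le univ_nonempty h
  exact Real.iSup_nonneg' ⟨i, sub_nonneg.2 hi⟩

lemma mul_one_add_dmax_le {s t : ℝ} (hs : 0 ≤ s) (hst : s ≤ t) (hv' : v' ≤ 1)
    (h : s • v ≤ t • v') : s * (1 + dmax v v') ≤ t := by
  have hcoord (i : Fin n) : s * (v i - v' i) ≤ t - s :=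
    calc s * (v i - v' i) = s * v i - s * v' i := mul_sub ..
      _ ≤ t * v' i - s * v' i := sub_le_sub_right (h i) _
      _ = (t - s) * v' i := (sub_mul ..).symm
      _ ≤ t - s := mul_le_of_le_one_right (sub_nonneg.2 hst) (hv' i)
  have hdmax : s * dmax v v' ≤ t - s := by
    rw [dmax, Real.mul_iSup_of_nonneg hs]
    exact ciSup_le hcoord
  linarith

end Dmax

section Emp

variable {n : ℕ} (it : ℕ → Fin n)

lemma natCast_mul_emp (t : ℕ) (i : Fin n) :
    (t : ℝ) * emp it t i = ∑ r ∈ range t, if it r = i then (1 : ℝ) else 0 :=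
  mul_div_cancel_of_imp' fun ht => by simp [Nat.cast_eq_zero.1 ht]

lemma monotone_natCast_smul_emp : Monotone fun t : ℕ => (t : ℝ) • emp it t := by
  intro s t hst i
  simp only [Pi.smul_apply, smul_eq_mul, natCast_mul_emp]
  exact sum_le_sum_of_subset_of_nonneg (range_mono hst) fun r _ _ => by positivity

variable {t t' : ℕ}

lemma emp_mem_stdSimplex (ht : 0 < t) : emp it t ∈ stdSimplex ℝ (Fin n) := by
  refine ⟨fun i => div_nonneg (sum_nonneg fun r _ => by positivity) t.cast_nonneg, ?_⟩
  have hcount : ∑ i, ∑ r ∈ range t, (if it r = i then (1 : ℝ) else 0) = t := by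
    rw [sum_comm]
    simp
  simp only [emp, ← sum_div, hcount]
  exact div_self (Nat.cast_ne_zero.2 ht.ne')

lemma dmax_emp_nonneg (ht : 0 < t) (ht' : 0 < t') : 0 ≤ dmax (emp it t) (emp it t') := by
  have : Nonempty (Fin n) := ⟨it 0⟩
  exact dmax_nonneg_of_sum_le
    ((emp_mem_stdSimplex it ht').2.trans (emp_mem_stdSimplex it ht).2.symm).le

lemma mul_one_add_dmax_emp_le (ht : 0 < t) (htt' : t ≤ t') :
    (t : ℝ) * (1 + dmax (emp it t) (emp it t')) ≤ t' := by
  have : Nonempty (Fin n) := ⟨it 0⟩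
  have hle_one : emp it t' ≤ 1 := fun i =>
    (mem_Icc_of_mem_stdSimplex (emp_mem_stdSimplex it (ht.trans_le htt')) i).2
  exact mul_one_add_dmax_le t.cast_nonneg (Nat.cast_le.2 htt') hle_one
    (monotone_natCast_smul_emp it htt')

lemma prod_one_add_dmax_emp_le {τ : ℕ → ℕ} {k : ℕ} (hpos : 0 < τ 0)
    (hmono : MonotoneOn τ (Set.Iic k)) :
    ∏ j ∈ range k, (1 + dmax (emp it (τ j)) (emp it (τ (j + 1)))) ≤ (τ k : ℝ) := by
  have hτpos (j : ℕ) (hj : j ≤ k) : 0 < τ j := hpos.trans_le (hmono k.zero_le hj j.zero_le)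
  refine prod_range_le_of_mul_le (f := fun j => (τ j : ℝ)) (Nat.one_le_cast.2 hpos)
    (fun j hj => ?_) fun j hj => ?_
  · exact add_nonneg zero_le_one (dmax_emp_nonneg it (hτpos j hj.le) (hτpos (j + 1) hj))
  · exact mul_one_add_dmax_emp_le it (hτpos j hj.le) (hmono hj.le hj j.le_succ)

end Emp

/-- If every point of a finite set `S` of distributions is realized as an empirical
distribution at some time `t ≤ T`, then `T` is at least the minimum over all orderings
`σ` of `S` of `∏_{i=1}^{|S|−1} (1 + d_max(σ(i), σ(i+1)))`; equivalently, some ordering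
`σ` of `S` has `∏_{i=1}^{|S|−1} (1 + d_max(σ(i), σ(i+1))) ≤ T`. -/
theorem query_learning_time_lower_bound {n : ℕ} (hn : 1 ≤ n) (T : ℕ)
    (it : ℕ → Fin n) (S : Finset (Fin n → ℝ)) (hS : S.Nonempty)
    (hreal : ∀ v ∈ S, ∃ t, 1 ≤ t ∧ t ≤ T ∧ emp it t = v) :
    ∃ σ : ℕ → (Fin n → ℝ),
      (∀ j < S.card, σ j ∈ S) ∧
      Set.InjOn σ (Finset.range S.card) ∧
      ∏ j ∈ Finset.range (S.card - 1), (1 + dmax (σ j) (σ (j + 1))) ≤ (T : ℝ) := by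
  have hsurj : Set.SurjOn (emp it) (Set.Icc 1 T) S := fun v hv =>
    let ⟨t, ht, htT, htv⟩ := hreal v hv
    ⟨t, ⟨ht, htT⟩, htv⟩
  obtain ⟨τ, hmono, htimes, hbij⟩ := exists_strictMonoOn_bijOn_comp_of_surjOn hsurj
  have hlast : S.card - 1 < S.card := Nat.sub_one_lt hS.card_ne_zero
  refine ⟨emp it ∘ τ, fun j hj => hbij.mapsTo hj, ?_, ?_⟩
  · rw [coe_range]
    exact hbij.injOn
  · calc ∏ j ∈ range (S.card - 1), (1 + dmax ((emp it ∘ τ) j) ((emp it ∘ τ) (j + 1)))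
        ≤ (τ (S.card - 1) : ℝ) := prod_one_add_dmax_emp_le it (htimes hS.card_pos).1
          (hmono.monotoneOn.mono (Set.Iic_subset_Iio.2 hlast))
      _ ≤ T := Nat.cast_le.2 (htimes hlast).2
end

section
/- Let T ≥ 1, let G, D > 0, and let K_1 ⊇ K_2 ⊇ ⋯ ⊇ K_T be nonempty closed convex subsets of ℝ^m, each of diameter at most D (i.e., ‖a − b‖ ≤ D for all a, b in K_t). Let ℓ_1, …, ℓ_T : ℝ^m → ℝ be convex differentiable functions with ‖∇ℓ_t(x)‖ ≤ G for all x ∈ ℝ^m and all t. Set η = D/(G√T), let x_1 ∈ K_1, and define x_{t+1} = Π_{K_{t+1}}(x_t − η ∇ℓ_t(x_t)) for 1 ≤ t ≤ T−1. Then for every x* ∈ K_T, Σ_{t=1}^{T} ℓ_t(x_t) − Σ_{t=1}^{T} ℓ_t(x*) ≤ G·D·√T. -/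
open Finset

/-!
Projecting onto a convex set does not increase the distance to any point `z` of that set, so the
squared distance from the iterates to `z` is a potential: expanding `‖x - η g - z‖²` shows that each
step lowers it by at least `2η ⟪g, x - z⟫ - η² ‖g‖²`. The sets may change between steps as long as
each contains `z`. Summing telescopes, the subgradient inequality turns `⟪g, x - z⟫` into excess
loss, and `η = D / (G √T)` balances the two terms `D² / (2η)` and `η T G² / 2`.
-/

section Subgradient

variable {E : Type*} [NormedAddCommGroup E]

theorem add_apply_sub_le_of_convexOn_of_hasFDerivWithinAt [NormedSpace ℝ E] {f : E → ℝ}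
    {f' : E →L[ℝ] ℝ} {s : Set E} {x y : E} (hf : ConvexOn ℝ s f)
    (hf' : HasFDerivWithinAt f f' s x) (hx : x ∈ s) (hy : y ∈ s) :
    f x + f' (y - x) ≤ f y := by
  let line : ℝ →ᵃ[ℝ] E := AffineMap.lineMap x y
  have line_zero : line 0 = x := AffineMap.lineMap_apply_zero x y
  have line_one : line 1 = y := AffineMap.lineMap_apply_one x y
  have hderiv : HasDerivWithinAt (f ∘ line) (f' (y - x)) (line ⁻¹' s) 0 :=
    (line_zero.symm ▸ hf' : HasFDerivWithinAt f f' s (line 0)).comp_hasDerivWithinAt 0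
      AffineMap.hasDerivWithinAt_lineMap (Set.mapsTo_preimage line s)
  have hslope : f' (y - x) ≤ slope (f ∘ line) 0 1 :=
    (hf.comp_affineMap line).le_slope_of_hasDerivWithinAt (by simpa [line_zero] using hx)
      (by simpa [line_one] using hy) one_pos hderiv
  simp only [slope_def_field, Function.comp_apply, line_zero, line_one, sub_zero, div_one]
    at hslope
  linarith

variable [InnerProductSpace ℝ E]

/-- `g` is a subgradient of `f` at `x` relative to `s`: the affine function with slope `g` that
agrees with `f` at `x` minorizes `f` on `s`. -/
def IsSubgradientWithinAt (f : E → ℝ) (g : E) (s : Set E) (x : E) : Prop :=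
  ∀ y ∈ s, f x + inner ℝ g (y - x) ≤ f y

theorem IsSubgradientWithinAt.mono {f : E → ℝ} {g x : E} {s t : Set E}
    (h : IsSubgradientWithinAt f g t x) (hst : s ⊆ t) : IsSubgradientWithinAt f g s x :=
  fun y hy => h y (hst hy)

theorem IsSubgradientWithinAt.sub_le_inner {f : E → ℝ} {g x z : E} {s : Set E}
    (h : IsSubgradientWithinAt f g s x) (hz : z ∈ s) : f x - f z ≤ inner ℝ g (x - z) := by
  have hsub := h z hz
  rw [← neg_sub x z, inner_neg_right] at hsub
  linarith

theorem isSubgradientWithinAt_of_hasGradientWithinAt [CompleteSpace E] {f : E → ℝ} {g x : E}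
    {s : Set E} (hf : ConvexOn ℝ s f) (hg : HasGradientWithinAt f g s x) (hx : x ∈ s) :
    IsSubgradientWithinAt f g s x :=
  fun _ hy => add_apply_sub_le_of_convexOn_of_hasFDerivWithinAt hf hg.hasFDerivWithinAt hx hy

theorem isSubgradientWithinAt_of_hasGradientAt [CompleteSpace E] {f : E → ℝ} {g x : E}
    (hf : ConvexOn ℝ Set.univ f) (hg : HasGradientAt f g x) (s : Set E) :
    IsSubgradientWithinAt f g s x :=
  (isSubgradientWithinAt_of_hasGradientWithinAt hf (hasGradientWithinAt_univ.2 hg)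
    (Set.mem_univ x)).mono (Set.subset_univ s)

end Subgradient

section Projection

variable {E : Type*} [NormedAddCommGroup E]

/-- `p` is a metric projection of `u` onto `K`: a point of `K` closest to `u`. As a predicate it
needs no existence or uniqueness of the projection. -/
def IsMetricProjection (K : Set E) (u p : E) : Prop :=
  p ∈ K ∧ ∀ y ∈ K, ‖p - u‖ ≤ ‖y - u‖

namespace IsMetricProjection

variable [InnerProductSpace ℝ E] {K : Set E} {u p z : E}

theorem inner_sub_sub_nonpos (h : IsMetricProjection K u p) (hK : Convex ℝ K) (hz : z ∈ K) :
    inner ℝ (u - p) (z - p) ≤ 0 := by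
  have hinf : ‖u - p‖ = ⨅ y : K, ‖u - y‖ := by
    have : Nonempty K := ⟨⟨p, h.1⟩⟩
    refine le_antisymm (le_ciInf fun y => ?_)
      (ciInf_le (f := fun y : K => ‖u - y‖) ⟨0, ?_⟩ ⟨p, h.1⟩)
    · simpa only [norm_sub_rev] using h.2 y y.2
    · exact Set.forall_mem_range.2 fun y => norm_nonneg _
  exact (norm_eq_iInf_iff_real_inner_le_zero hK h.1).1 hinf z hz

theorem norm_sub_le (h : IsMetricProjection K u p) (hK : Convex ℝ K) (hz : z ∈ K) :
    ‖p - z‖ ≤ ‖u - z‖ := by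
  have hexpand := norm_sub_sq_real (u - p) (z - p)
  rw [sub_sub_sub_cancel_right] at hexpand
  rw [norm_sub_rev p z]
  refine le_of_sq_le_sq ?_ (norm_nonneg _)
  linarith [h.inner_sub_sub_nonpos hK hz, sq_nonneg ‖u - p‖]

end IsMetricProjection

end Projection

theorem mem_of_forall_succ_subset {α : Type*} {K : ℕ → Set α} {a b : ℕ} {z : α}
    (hK : ∀ t, a ≤ t → t + 1 ≤ b → K (t + 1) ⊆ K t) (hz : z ∈ K b) :
    ∀ t ∈ Set.Icc a b, z ∈ K t := by
  have hanti : AntitoneOn K (Set.Icc a b) :=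
    antitoneOn_of_succ_le Set.ordConnected_Icc fun t _ ht hsucc => hK t ht.1 hsucc.2
  exact fun t ht => hanti ht ⟨ht.1.trans ht.2, le_rfl⟩ ht.2 hz

section Descent

variable {E : Type*} [NormedAddCommGroup E] [InnerProductSpace ℝ E]

theorem norm_sub_smul_sub_sq (x g z : E) (η : ℝ) :
    ‖x - η • g - z‖ ^ 2 = ‖x - z‖ ^ 2 - 2 * η * inner ℝ g (x - z) + η ^ 2 * ‖g‖ ^ 2 := by
  rw [sub_right_comm, norm_sub_sq_real, real_inner_smul_right, real_inner_comm, norm_smul, mul_pow,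
    Real.norm_eq_abs, sq_abs]
  ring

/-- `x 1, …, x T` is a run of projected descent with step size `η` along the directions
`g 1, …, g (T - 1)`, the iterate `x t` being constrained to `K t` for `2 ≤ t ≤ T`. Nothing is
required of the starting point `x 1`. -/
def IsProjectedDescent (K : ℕ → Set E) (η : ℝ) (g x : ℕ → E) (T : ℕ) : Prop :=
  ∀ t ∈ Set.Ico 1 T, IsMetricProjection (K (t + 1)) (x t - η • g t) (x (t + 1))

namespace IsProjectedDescent

variable {K : ℕ → Set E} {g x : ℕ → E} {z : E} {T : ℕ} {η : ℝ}

-- The last step is left unprojected: there is no decision set `K (T + 1)`.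
theorem two_mul_sum_inner_add_sq_le (h : IsProjectedDescent K η g x T) (hT : 1 ≤ T)
    (hK : ∀ t ∈ Set.Ioc 1 T, Convex ℝ (K t)) (hz : ∀ t ∈ Set.Ioc 1 T, z ∈ K t) :
    2 * η * ∑ t ∈ Icc 1 T, inner ℝ (g t) (x t - z) + ‖x T - η • g T - z‖ ^ 2 ≤
      ‖x 1 - z‖ ^ 2 + η ^ 2 * ∑ t ∈ Icc 1 T, ‖g t‖ ^ 2 := by
  induction T, hT using Nat.le_induction with
  | base =>
    rw [norm_sub_smul_sub_sq]
    simp only [Icc_self, sum_singleton]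
    linarith
  | succ n hn ih =>
    have hlast : n + 1 ∈ Set.Ioc 1 (n + 1) := ⟨by omega, le_rfl⟩
    have hinit : Set.Ioc 1 n ⊆ Set.Ioc 1 (n + 1) := Set.Ioc_subset_Ioc_right n.le_succ
    have hprev := ih (fun t ht => h t ⟨ht.1, ht.2.trans n.lt_succ_self⟩)
      (fun t ht => hK t (hinit ht)) (fun t ht => hz t (hinit ht))
    have hcontract : ‖x (n + 1) - z‖ ^ 2 ≤ ‖x n - η • g n - z‖ ^ 2 := by
      gcongr
      exact (h n ⟨hn, n.lt_succ_self⟩).norm_sub_le (hK _ hlast) (hz _ hlast)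
    rw [sum_Icc_succ_top (by omega), sum_Icc_succ_top (by omega), norm_sub_smul_sub_sq]
    linarith

theorem sum_inner_le (h : IsProjectedDescent K η g x T) (hT : 1 ≤ T) (hη : 0 < η)
    (hK : ∀ t ∈ Set.Ioc 1 T, Convex ℝ (K t)) (hz : ∀ t ∈ Set.Ioc 1 T, z ∈ K t) {G D : ℝ}
    (hx : ‖x 1 - z‖ ≤ D) (hg : ∀ t ∈ Set.Icc 1 T, ‖g t‖ ≤ G) :
    ∑ t ∈ Icc 1 T, inner ℝ (g t) (x t - z) ≤ D ^ 2 / (2 * η) + η * T * G ^ 2 / 2 := by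
  have hstart : ‖x 1 - z‖ ^ 2 ≤ D ^ 2 := by gcongr
  have hgrad : ∑ t ∈ Icc 1 T, ‖g t‖ ^ 2 ≤ T * G ^ 2 := by
    calc ∑ t ∈ Icc 1 T, ‖g t‖ ^ 2 ≤ ∑ _t ∈ Icc 1 T, G ^ 2 :=
          sum_le_sum fun t ht => pow_le_pow_left₀ (norm_nonneg _) (hg t (mem_Icc.1 ht)) 2
      _ = T * G ^ 2 := by simp
  refine le_of_mul_le_mul_left ?_ (mul_pos two_pos hη)
  calc 2 * η * ∑ t ∈ Icc 1 T, inner ℝ (g t) (x t - z)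
      ≤ ‖x 1 - z‖ ^ 2 + η ^ 2 * ∑ t ∈ Icc 1 T, ‖g t‖ ^ 2 := by
        linarith [h.two_mul_sum_inner_add_sq_le hT hK hz, sq_nonneg ‖x T - η • g T - z‖]
    _ ≤ D ^ 2 + η ^ 2 * (T * G ^ 2) := by gcongr
    _ = 2 * η * (D ^ 2 / (2 * η) + η * T * G ^ 2 / 2) := by field_simp

end IsProjectedDescent

theorem contracting_ogd_regret_general {K : ℕ → Set E} {g x : ℕ → E} {z : E} {T : ℕ} {G D : ℝ}
    (hT : 1 ≤ T) (hG : 0 < G) (hD : 0 < D)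
    (hK : ∀ t ∈ Set.Ioc 1 T, Convex ℝ (K t)) (hz : ∀ t ∈ Set.Icc 1 T, z ∈ K t)
    {ℓ : ℕ → E → ℝ} (hsub : ∀ t ∈ Set.Icc 1 T, IsSubgradientWithinAt (ℓ t) (g t) (K t) (x t))
    (hg : ∀ t ∈ Set.Icc 1 T, ‖g t‖ ≤ G) (hx1 : ‖x 1 - z‖ ≤ D)
    (hx : IsProjectedDescent K (D / (G * √T)) g x T) :
    ∑ t ∈ Icc 1 T, ℓ t (x t) - ∑ t ∈ Icc 1 T, ℓ t z ≤ G * D * √T := by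
  have hTpos : (0 : ℝ) < T := by exact_mod_cast hT
  have hη : 0 < D / (G * √T) := by positivity
  calc ∑ t ∈ Icc 1 T, ℓ t (x t) - ∑ t ∈ Icc 1 T, ℓ t z
      = ∑ t ∈ Icc 1 T, (ℓ t (x t) - ℓ t z) := (sum_sub_distrib _ _).symm
    _ ≤ ∑ t ∈ Icc 1 T, inner ℝ (g t) (x t - z) := sum_le_sum fun t ht =>
        (hsub t (mem_Icc.1 ht)).sub_le_inner (hz t (mem_Icc.1 ht))
    _ ≤ D ^ 2 / (2 * (D / (G * √T))) + D / (G * √T) * T * G ^ 2 / 2 :=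
        hx.sum_inner_le hT hη hK (fun t ht => hz t (Set.Ioc_subset_Icc_self ht)) hx1 hg
    _ = G * D * √T := by
        field_simp
        rw [Real.sq_sqrt hTpos.le]
        ring

end Descent

/-- Regret bound for online gradient descent over a contracting sequence of decision sets:
if `x_{t+1}` is the metric projection of `x_t − η ∇ℓ_t(x_t)` onto `K_{t+1}`, where the
convex decision sets `K_t` are nested decreasing with diameter at most `D`, the gradients
are bounded by `G`, and `η = D/(G√T)`, then the regret against any `x* ∈ K_T` is at most
`G·D·√T`. -/
theorem contracting_ogd_regret {m T : ℕ} (hT : 1 ≤ T) (G D : ℝ)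
    (hG : 0 < G) (hD : 0 < D)
    (K : ℕ → Set (EuclideanSpace ℝ (Fin m)))
    (hKne : ∀ t, 1 ≤ t → t ≤ T → (K t).Nonempty)
    (hKclosed : ∀ t, 1 ≤ t → t ≤ T → IsClosed (K t))
    (hKconv : ∀ t, 1 ≤ t → t ≤ T → Convex ℝ (K t))
    (hKmono : ∀ t, 1 ≤ t → t + 1 ≤ T → K (t + 1) ⊆ K t)
    (hKdiam : ∀ t, 1 ≤ t → t ≤ T → ∀ a ∈ K t, ∀ b ∈ K t, ‖a - b‖ ≤ D)
    (ℓ : ℕ → EuclideanSpace ℝ (Fin m) → ℝ)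
    (gr : ℕ → EuclideanSpace ℝ (Fin m) → EuclideanSpace ℝ (Fin m))
    (hconv : ∀ t, ConvexOn ℝ Set.univ (ℓ t))
    (hgrad : ∀ t x, HasGradientAt (ℓ t) (gr t x) x)
    (hGbd : ∀ t x, ‖gr t x‖ ≤ G)
    (η : ℝ) (hη : η = D / (G * Real.sqrt T))
    (x : ℕ → EuclideanSpace ℝ (Fin m))
    (hx1 : x 1 ∈ K 1)
    (hproj : ∀ t, 1 ≤ t → t + 1 ≤ T →
      x (t + 1) ∈ K (t + 1) ∧
      ∀ y ∈ K (t + 1),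
        ‖x (t + 1) - (x t - η • gr t (x t))‖ ≤ ‖y - (x t - η • gr t (x t))‖)
    (xstar : EuclideanSpace ℝ (Fin m)) (hxstar : xstar ∈ K T) :
    ∑ t ∈ Finset.Icc 1 T, ℓ t (x t) - ∑ t ∈ Finset.Icc 1 T, ℓ t xstar
      ≤ G * D * Real.sqrt T := by
  have hmem := mem_of_forall_succ_subset hKmono hxstar
  exact contracting_ogd_regret_general hT hG hD (fun t ht => hKconv t ht.1.le ht.2) hmem
    (fun t _ => isSubgradientWithinAt_of_hasGradientAt (hconv t) (hgrad t (x t)) (K t))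
    (fun t _ => hGbd t (x t)) (hKdiam 1 le_rfl hT _ hx1 _ (hmem 1 ⟨le_rfl, hT⟩))
    (fun t ht => hη ▸ hproj t ht.1 ht.2)
end

section
/- Let N ≥ 1 and let f : ℝ^N → ℝ be a multilinear polynomial (each variable appears with degree at most 1 in every monomial). Let m ⊆ {1,…,N} be a set of variables with |m| = d ≥ 1, and suppose |f(x)| ≤ 1 for all x ∈ [0, 1/d]^N. Then the coefficient of the monomial ∏_{i∈m} x_i in f has absolute value at most (d+1)·d^{2d}. -/
open Finset

/-! For a point `x` and a set `m` of variables, let `S` range over the subsets of `m` and evaluate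
`f` at the vertices `1_S · x` of the cube spanned by `x` on `m`. A monomial with set of variables
`A` vanishes at `1_S · x` unless `A ⊆ S`, so in the sum of these values with signs `(-1) ^ |m \ S|`
inclusion–exclusion cancels every monomial except those with `A = m`. If `f` is multilinear, the
only such monomial is `∏ i ∈ m, X i`, so its coefficient times `∏ i ∈ m, x i` is a signed sum of
`2 ^ |m|` values of `f`. Taking all `x i = 1 / d` gives the bound `(2 * d) ^ d`. -/

section Cube

variable {ι R : Type*} [DecidableEq ι]

lemma sum_powerset_neg_one_pow_card_sdiff_mul_ite_subset [CommRing R] (A m : Finset ι) :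
    ∑ S ∈ m.powerset, (-1 : R) ^ #(m \ S) * (if A ⊆ S then 1 else 0) = if A = m then 1 else 0 := by
  by_cases hA : A ⊆ m
  · have hterm : ∀ S ∈ m.powerset, (-1 : R) ^ #(m \ S) * (if A ⊆ S then 1 else 0) =
        (∏ _i ∈ S, 1) * ∏ i ∈ m \ S, (if i ∉ A then -1 else 0) := fun S _ ↦ by
      have hsub : (∀ i ∈ m \ S, i ∉ A) ↔ A ⊆ S := by grind
      simp only [prod_ite_zero, hsub, prod_const, one_pow, one_mul, mul_ite, mul_one, mul_zero]
    calc ∑ S ∈ m.powerset, (-1 : R) ^ #(m \ S) * (if A ⊆ S then 1 else 0)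
      _ = ∏ i ∈ m, (1 + if i ∉ A then -1 else 0) := by rw [prod_add, sum_congr rfl hterm]
      _ = ∏ i ∈ m, (if i ∈ A then 1 else 0) :=
        prod_congr rfl fun i _ ↦ by by_cases hi : i ∈ A <;> simp [hi]
      _ = if A = m then 1 else 0 := by
        have hsup : (∀ i ∈ m, i ∈ A) ↔ A = m := ⟨hA.antisymm, fun h _ ↦ (h ▸ ·)⟩
        simp [prod_ite_zero, hsup]
  · rw [if_neg fun h ↦ hA h.subset]
    refine sum_eq_zero fun S hS ↦ ?_
    rw [if_neg fun h ↦ hA (h.trans (mem_powerset.mp hS)), mul_zero]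

lemma norm_sum_powerset_neg_one_pow_mul_le [SeminormedRing R] {m : Finset ι} {g : Finset ι → R}
    {C : ℝ} (hg : ∀ S ⊆ m, ‖g S‖ ≤ C) :
    ‖∑ S ∈ m.powerset, (-1) ^ #(m \ S) * g S‖ ≤ 2 ^ #m * C := by
  have hterm : ∀ S ∈ m.powerset, ‖(-1) ^ #(m \ S) * g S‖ ≤ C := fun S hS ↦ by
    obtain h | h := neg_one_pow_eq_or R #(m \ S) <;> simpa [h] using hg S (mem_powerset.mp hS)
  simpa using norm_sum_le_of_le _ hterm

end Cube

section Evaluation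

variable {ι R : Type*}

lemma prod_support_indicator_pow [CommSemiring R] (S : Finset ι) (x : ι → R) (σ : ι →₀ ℕ)
    [Decidable (σ.support ⊆ S)] :
    ∏ i ∈ σ.support, (S : Set ι).indicator x i ^ σ i =
      if σ.support ⊆ S then ∏ i ∈ σ.support, x i ^ σ i else 0 := by
  split_ifs with h
  · exact prod_congr rfl fun i hi ↦ by rw [Set.indicator_of_mem (mem_coe.mpr (h hi))]
  · obtain ⟨i, hi, hiS⟩ := not_subset.mp h
    exact prod_eq_zero hi <| by
      rw [Set.indicator_of_notMem (mt mem_coe.mp hiS), zero_pow (Finsupp.mem_support_iff.mp hi)]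

variable [DecidableEq ι]

lemma sum_powerset_neg_one_pow_mul_eval_indicator [CommRing R] (f : MvPolynomial ι R)
    (m : Finset ι) (x : ι → R) :
    ∑ S ∈ m.powerset, (-1) ^ #(m \ S) * f.eval ((S : Set ι).indicator x) =
      ∑ σ ∈ f.support with σ.support = m, f.coeff σ * ∏ i ∈ m, x i ^ σ i := by
  calc ∑ S ∈ m.powerset, (-1) ^ #(m \ S) * f.eval ((S : Set ι).indicator x)
    _ = ∑ σ ∈ f.support, (f.coeff σ * ∏ i ∈ σ.support, x i ^ σ i) *
          ∑ S ∈ m.powerset, (-1) ^ #(m \ S) * (if σ.support ⊆ S then 1 else 0) := by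
      simp_rw [MvPolynomial.eval_eq, prod_support_indicator_pow, mul_sum]
      rw [sum_comm]
      refine sum_congr rfl fun σ _ ↦ sum_congr rfl fun S _ ↦ ?_
      split_ifs <;> ring
    _ = ∑ σ ∈ f.support with σ.support = m, f.coeff σ * ∏ i ∈ m, x i ^ σ i := by
      simp_rw [sum_powerset_neg_one_pow_card_sdiff_mul_ite_subset, mul_ite, mul_one, mul_zero]
      rw [← sum_filter]
      exact sum_congr rfl fun σ hσ ↦ by rw [(mem_filter.mp hσ).2]

end Evaluation

section Multilinear

variable {ι R : Type*}

lemma sum_single_one_apply [DecidableEq ι] (m : Finset ι) (i : ι) :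
    (∑ j ∈ m, Finsupp.single j 1 : ι →₀ ℕ) i = if i ∈ m then 1 else 0 := by
  simp [Finsupp.finsetSum_apply, Finsupp.single_apply]

lemma support_sum_single_one (m : Finset ι) :
    (∑ i ∈ m, Finsupp.single i 1 : ι →₀ ℕ).support = m := by
  classical
  ext i
  simp [sum_single_one_apply]

lemma eq_sum_single_one_of_le_one {σ : ι →₀ ℕ} (hσ : ∀ i, σ i ≤ 1) :
    σ = ∑ i ∈ σ.support, Finsupp.single i 1 := by
  conv_lhs => rw [← σ.sum_single]
  refine sum_congr rfl fun i hi ↦ ?_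
  rw [(hσ i).antisymm (Nat.one_le_iff_ne_zero.mpr (Finsupp.mem_support_iff.mp hi))]

lemma sum_powerset_neg_one_pow_mul_eval_indicator_of_multilinear [DecidableEq ι] [CommRing R]
    {f : MvPolynomial ι R} {m : Finset ι} (hf : ∀ σ ∈ f.support, σ.support = m → ∀ i, σ i ≤ 1)
    (x : ι → R) :
    ∑ S ∈ m.powerset, (-1) ^ #(m \ S) * f.eval ((S : Set ι).indicator x) =
      f.coeff (∑ i ∈ m, Finsupp.single i 1) * ∏ i ∈ m, x i := by
  have hprod : ∏ i ∈ m, x i ^ (∑ j ∈ m, Finsupp.single j 1 : ι →₀ ℕ) i = ∏ i ∈ m, x i :=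
    prod_congr rfl fun i hi ↦ by rw [sum_single_one_apply, if_pos hi, pow_one]
  rw [sum_powerset_neg_one_pow_mul_eval_indicator,
    sum_eq_single (∑ i ∈ m, Finsupp.single i 1), hprod]
  · intro σ hσ hne
    obtain ⟨hσf, rfl⟩ := mem_filter.mp hσ
    exact absurd (eq_sum_single_one_of_le_one (hf σ hσf rfl)) hne
  · intro h
    have hcoeff : f.coeff (∑ i ∈ m, Finsupp.single i 1) = 0 := by
      simpa [support_sum_single_one] using h
    rw [hcoeff, zero_mul]

theorem multilinear_coeff_bound_general {𝕜 : Type*} [NormedField 𝕜] {f : MvPolynomial ι 𝕜}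
    {m : Finset ι} (hf : ∀ σ ∈ f.support, σ.support = m → ∀ i, σ i ≤ 1)
    {x : ι → 𝕜} (hx : ∀ i ∈ m, x i ≠ 0) {C : ℝ}
    (hC : ∀ S ⊆ m, ‖f.eval ((S : Set ι).indicator x)‖ ≤ C) :
    ‖f.coeff (∑ i ∈ m, Finsupp.single i 1)‖ ≤ 2 ^ #m * C / ∏ i ∈ m, ‖x i‖ := by
  classical
  rw [le_div_iff₀ (prod_pos fun i hi ↦ norm_pos_iff.mpr (hx i hi)), ← norm_prod, ← norm_mul,
    ← sum_powerset_neg_one_pow_mul_eval_indicator_of_multilinear hf]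
  exact norm_sum_powerset_neg_one_pow_mul_le hC

end Multilinear

lemma two_pow_mul_pow_self_le (d : ℕ) : 2 ^ d * d ^ d ≤ (d + 1) * d ^ (2 * d) := by
  have htwo : 2 ^ d ≤ (d + 1) * d ^ d := by
    obtain hd | hd := Nat.lt_or_ge d 2
    · interval_cases d <;> norm_num
    · exact (Nat.pow_le_pow_left hd d).trans (Nat.le_mul_of_pos_left _ d.succ_pos)
  calc 2 ^ d * d ^ d ≤ (d + 1) * d ^ d * d ^ d := Nat.mul_le_mul_right _ htwo
    _ = (d + 1) * d ^ (2 * d) := by ring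

/-- A multilinear polynomial in `N` variables (every variable has individual degree at
most `1`) that is bounded by `1` on the box `[0, 1/d]^N` has the coefficient of any
degree-`d` monomial `∏_{i ∈ m} x_i` bounded in absolute value by `(d+1)·d^{2d}`. -/
theorem multilinear_coeff_bound (N : ℕ) (hN : 1 ≤ N)
    (f : MvPolynomial (Fin N) ℝ)
    (hml : ∀ σ ∈ f.support, ∀ i, σ i ≤ 1)
    (m : Finset (Fin N)) (d : ℕ) (hd : 1 ≤ d) (hcard : m.card = d)
    (hbound : ∀ x : Fin N → ℝ, (∀ i, x i ∈ Set.Icc (0 : ℝ) (1 / d)) →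
      |MvPolynomial.eval x f| ≤ 1) :
    |MvPolynomial.coeff (∑ i ∈ m, Finsupp.single i 1) f|
      ≤ ((d : ℝ) + 1) * (d : ℝ) ^ (2 * d) := by
  have hd₀ : (0 : ℝ) < 1 / d := by positivity
  have hvertex (S : Finset (Fin N)) (_ : S ⊆ m) :
      |f.eval ((S : Set (Fin N)).indicator fun _ ↦ 1 / (d : ℝ))| ≤ 1 :=
    hbound _ fun i ↦ ⟨Set.indicator_nonneg (fun _ _ ↦ hd₀.le) i,
      Set.indicator_le_self' (fun _ _ ↦ hd₀.le) i⟩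
  calc |f.coeff (∑ i ∈ m, Finsupp.single i 1)|
    _ ≤ 2 ^ #m * 1 / ∏ i ∈ m, ‖1 / (d : ℝ)‖ :=
      multilinear_coeff_bound_general (fun σ hσ _ ↦ hml σ hσ) (fun _ _ ↦ hd₀.ne') hvertex
    _ = 2 ^ d * (d : ℝ) ^ d := by simp [hcard]
    _ ≤ (d + 1) * (d : ℝ) ^ (2 * d) := by exact_mod_cast two_pow_mul_pow_self_le d
end

section
/- Let n ≥ 2 and let d ≥ 2 be an even integer. Let Z > 0 satisfy 1/n − d/(2Z) ≥ 0 and 1/n + d/(2Z) ≤ 1, and consider the d+1 distinct interpolation nodes x_0 = 1/n and x_{±j} = 1/n ± j/Z for j = 1, …, d/2, all lying in [0,1]. Then for every node index j and every x ∈ [0,1], the Lagrange basis polynomial L_j(x) = ∏_{k ≠ j} (x − x_k)/(x_j − x_k) satisfies |L_j(x)| ≤ Z^d / ((d/2)!)². -/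
open Finset

/-!
Every factor `x - x_k` of the numerator of `L_j(x)` is at most the length of the interval, while
the `d` distances from `j` to the other indices multiply to `p! q!`, where `p` and `q` are the
numbers of nodes to the left and to the right of `x_j`. Since `p + q = d` and the binomial
coefficient `d.choose p` is largest in the middle, `p! q!` is smallest for the central nodes.
-/

section EquispacedNodes

open scoped Nat

lemma prod_Ioc_natAbs_sub (j : ℤ) (q : ℕ) : ∏ k ∈ Ioc j (j + q), (j - k).natAbs = q ! := by
  induction q with
  | zero => simp
  | succ q ih =>
    have hdist : (j - (j + q + 1)).natAbs = q + 1 := by omega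
    rw [Nat.cast_succ, ← add_assoc, ← insert_Ioc_right_eq_Ioc_add_one (by omega),
      prod_insert (by simp), ih, hdist, Nat.factorial_succ]

lemma prod_Ico_natAbs_sub (j : ℤ) (p : ℕ) : ∏ k ∈ Ico (j - p) j, (j - k).natAbs = p ! := by
  induction p with
  | zero => simp
  | succ p ih =>
    have hdist : (j - (j - p - 1)).natAbs = p + 1 := by omega
    rw [Nat.cast_succ, ← sub_sub, ← insert_Ico_left_eq_Ico_sub_one (by omega),
      prod_insert (by simp), ih, hdist, Nat.factorial_succ]

lemma prod_erase_Icc_natAbs_sub (j : ℤ) (p q : ℕ) :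
    ∏ k ∈ (Icc (j - p) (j + q)).erase j, (j - k).natAbs = p ! * q ! := by
  have hsplit : (Icc (j - p) (j + q)).erase j = Ico (j - p) j ∪ Ioc j (j + q) := by
    ext k
    simp only [mem_erase, mem_Icc, mem_union, mem_Ico, mem_Ioc]
    omega
  have hdisj : Disjoint (Ico (j - p) j) (Ioc j (j + q)) :=
    disjoint_left.2 fun k hk hk' => lt_asymm (mem_Ico.1 hk).2 (mem_Ioc.1 hk').1
  rw [hsplit, prod_union hdisj, prod_Ico_natAbs_sub, prod_Ioc_natAbs_sub]

lemma factorial_half_mul_factorial_half_le (p q : ℕ) :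
    ((p + q) / 2)! * ((p + q + 1) / 2)! ≤ p ! * q ! := by
  have hhalf : p + q - (p + q) / 2 = (p + q + 1) / 2 := by omega
  have hle : (p + q) / 2 ≤ p + q := Nat.div_le_self _ _
  refine Nat.le_of_mul_le_mul_left ?_ (Nat.choose_pos hle)
  calc (p + q).choose ((p + q) / 2) * (((p + q) / 2)! * ((p + q + 1) / 2)!)
      = (p + q)! := by
        rw [← mul_assoc, ← hhalf, Nat.choose_mul_factorial_mul_factorial hle]
    _ = (p + q).choose q * (p ! * q !) := by
        rw [← mul_assoc, Nat.add_choose_mul_factorial_mul_factorial]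
    _ ≤ (p + q).choose ((p + q) / 2) * (p ! * q !) := by
        gcongr
        exact Nat.choose_le_middle q (p + q)

variable {K : Type*} [Field K] [LinearOrder K] [IsStrictOrderedRing K]

lemma abs_prod_sub_div_sub_le {ι : Type*} {s : Finset ι} {node : ι → K} {x r : K}
    (hx : ∀ k ∈ s, |x - node k| ≤ r) (y : K) :
    |∏ k ∈ s, (x - node k) / (y - node k)| ≤ r ^ #s / ∏ k ∈ s, |y - node k| := by
  rw [prod_div_distrib, abs_div, abs_prod, abs_prod]
  gcongr
  exact (prod_le_prod (fun _ _ => abs_nonneg _) hx).trans_eq (prod_const r)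

variable {c Z : K} {node : ℤ → K}

lemma prod_erase_Icc_abs_sub_of_equispaced (hZ : 0 < Z) (hnode : ∀ k : ℤ, node k = c + k / Z)
    (j : ℤ) (p q : ℕ) :
    ∏ k ∈ (Icc (j - p) (j + q)).erase j, |node j - node k| = p ! * q ! / Z ^ (p + q) := by
  have hcard : #((Icc (j - p) (j + q)).erase j) = p + q := by
    rw [card_erase_of_mem (mem_Icc.2 ⟨by omega, by omega⟩), Int.card_Icc]
    omega
  have hdist (k : ℤ) : |node j - node k| = ((j - k).natAbs : K) / Z := by
    rw [hnode, hnode, add_sub_add_left_eq_sub, ← sub_div, abs_div, abs_of_pos hZ, Nat.cast_natAbs,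
      Int.cast_abs, Int.cast_sub]
  simp only [hdist]
  rw [prod_div_distrib, prod_const, hcard, ← Nat.cast_prod, prod_erase_Icc_natAbs_sub,
    Nat.cast_mul]

lemma monotone_of_equispaced (hZ : 0 < Z) (hnode : ∀ k : ℤ, node k = c + k / Z) :
    Monotone node := by
  intro k l hkl
  rw [hnode, hnode]
  gcongr

theorem lagrange_basis_bound_general {d : ℕ} {a b : ℤ} (hab : b = a + d) (hZ : 0 < Z)
    (hnode : ∀ k : ℤ, node k = c + k / Z) {u v : K} (hu : u ≤ node a) (hv : node b ≤ v) :
    ∀ j ∈ Icc a b, ∀ x ∈ Set.Icc u v,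
      |∏ k ∈ (Icc a b).erase j, (x - node k) / (node j - node k)|
        ≤ ((v - u) * Z) ^ d / ((d / 2)! * ((d + 1) / 2)!) := by
  intro j hj x hx
  have hmono := monotone_of_equispaced hZ hnode
  have hnum : ∀ k ∈ (Icc a b).erase j, |x - node k| ≤ v - u := fun k hk =>
    have hk' := mem_Icc.1 (mem_of_mem_erase hk)
    abs_sub_le_of_le_of_le hx.1 hx.2 (hu.trans (hmono hk'.1)) ((hmono hk'.2).trans hv)
  have hcard : #((Icc a b).erase j) = d := by
    rw [card_erase_of_mem hj, Int.card_Icc]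
    omega
  obtain ⟨p, hp⟩ := Int.le.dest (mem_Icc.1 hj).1
  obtain ⟨q, hq⟩ := Int.le.dest (mem_Icc.1 hj).2
  obtain rfl : d = p + q := by omega
  have hden : ∏ k ∈ (Icc a b).erase j, |node j - node k| = p ! * q ! / Z ^ (p + q) := by
    rw [← prod_erase_Icc_abs_sub_of_equispaced hZ hnode j, hq, ← hp, add_sub_cancel_right]
  calc |∏ k ∈ (Icc a b).erase j, (x - node k) / (node j - node k)|
      ≤ (v - u) ^ (p + q) / (p ! * q ! / Z ^ (p + q)) := by
        simpa only [hcard, hden] using abs_prod_sub_div_sub_le hnum (node j)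
    _ = ((v - u) * Z) ^ (p + q) / (p ! * q !) := by rw [div_div_eq_mul_div, mul_pow]
    _ ≤ ((v - u) * Z) ^ (p + q) / (((p + q) / 2)! * ((p + q + 1) / 2)!) := by
        have huv : 0 ≤ v - u := sub_nonneg.2 (hx.1.trans hx.2)
        refine div_le_div_of_nonneg_left (by positivity) (by positivity) ?_
        exact_mod_cast factorial_half_mul_factorial_half_le p q

end EquispacedNodes

/-- Bound on Lagrange basis polynomials for the nodes `1/n + j/Z`, `j = −d/2, …, d/2`
(with `d` even), all lying in `[0,1]`: for every node index `j` and every `x ∈ [0,1]`,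
`|L_j(x)| ≤ Z^d / ((d/2)!)²`. -/
theorem lagrange_basis_bound (n d : ℕ) (hn : 2 ≤ n) (hd : 2 ≤ d) (hdeven : Even d)
    (Z : ℝ) (hZ : 0 < Z)
    (hlow : 0 ≤ 1 / (n : ℝ) - (d : ℝ) / (2 * Z))
    (hhigh : 1 / (n : ℝ) + (d : ℝ) / (2 * Z) ≤ 1)
    (node : ℤ → ℝ) (hnode : ∀ j : ℤ, node j = 1 / (n : ℝ) + (j : ℝ) / Z) :
    ∀ j ∈ Finset.Icc (-((d : ℤ) / 2)) ((d : ℤ) / 2), ∀ x ∈ Set.Icc (0 : ℝ) 1,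
      |∏ k ∈ (Finset.Icc (-((d : ℤ) / 2)) ((d : ℤ) / 2)).erase j,
          (x - node k) / (node j - node k)|
        ≤ Z ^ d / ((Nat.factorial (d / 2) : ℝ)) ^ 2 := by
  obtain ⟨m, rfl⟩ := hdeven.two_dvd
  have hceil : (2 * m + 1) / 2 = 2 * m / 2 := by omega
  have hleft : 0 ≤ node (-(((2 * m : ℕ) : ℤ) / 2)) := by
    simpa [hnode, mul_div_mul_left, neg_div, ← sub_eq_add_neg] using hlow
  have hright : node (((2 * m : ℕ) : ℤ) / 2) ≤ 1 := by
    simpa [hnode, mul_div_mul_left] using hhigh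
  simpa only [sub_zero, one_mul, hceil, ← sq] using
    lagrange_basis_bound_general (d := 2 * m) (by omega) hZ hnode hleft hright
end

section
/- Let n ≥ 2 and let d ≥ 2 be an even integer. Let Z > 0 satisfy 1/n − d/(2Z) ≥ 0 and 1/n + d/(2Z) ≤ 1, and consider the d+1 distinct nodes x_0 = 1/n and x_{±j} = 1/n ± j/Z for j = 1, …, d/2. Let p and q be real polynomials of degree at most d, and let η ≥ 0 be such that |p(x_j) − q(x_j)| ≤ η at every node x_j. Then for every x ∈ [0,1], |p(x) − q(x)| ≤ (d+1) · η · Z^d / ((d/2)!)². -/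
open Finset

/-!
Lagrange interpolation bounds a polynomial by `η` times the Lebesgue function
`∑ i, |L_i|` of the nodes, where `η` bounds its absolute value on them. For `d + 1` nodes with gap
`h` in an interval of length `ℓ`, every numerator factor of `L_i` is at most `ℓ`, while the
denominator has absolute value `h ^ d * i! * (d - i)!`. Summing over `i` with
`∑ i, d.choose i = 2 ^ d` bounds the Lebesgue function by `(2 * ℓ / h) ^ d / d!`. For `d = 2 * m`,
the inequality `4 ^ m ≤ (2 * m + 1) * (2 * m).choose m` says `2 ^ d / d! ≤ (d + 1) / (m!) ^ 2`.
-/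

section LebesgueFunction

variable {ι K : Type*} [DecidableEq ι] [Field K]

theorem eval_lagrange_basis_eq_prod_div (s : Finset ι) (v : ι → K) (i : ι) (x : K) :
    (Lagrange.basis s v i).eval x = ∏ k ∈ s.erase i, (x - v k) / (v i - v k) := by
  simp [Lagrange.basis, Lagrange.basisDivisor, Polynomial.eval_prod, div_eq_inv_mul]

variable [LinearOrder K]

/-- The Lebesgue function of the nodes `v i`, `i ∈ s`: its value at `x` is the norm of
Lagrange interpolation at `x`, as a functional of the node values under the sup norm. -/
noncomputable def lebesgueFunction (s : Finset ι) (v : ι → K) (x : K) : K :=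
  ∑ i ∈ s, |(Lagrange.basis s v i).eval x|

theorem abs_eval_le_mul_lebesgueFunction [IsStrictOrderedRing K] {s : Finset ι} {v : ι → K}
    (hv : Set.InjOn v s) {P : Polynomial K} (hP : P.degree < #s) {η : K}
    (hη : ∀ i ∈ s, |P.eval (v i)| ≤ η) (x : K) :
    |P.eval x| ≤ η * lebesgueFunction s v x := by
  calc |P.eval x| = |∑ i ∈ s, P.eval (v i) * (Lagrange.basis s v i).eval x| := by
        conv_lhs => rw [Lagrange.eq_interpolate hv hP, Lagrange.interpolate_apply]
        simp only [Polynomial.eval_finsetSum, Polynomial.eval_mul, Polynomial.eval_C]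
    _ ≤ ∑ i ∈ s, |P.eval (v i)| * |(Lagrange.basis s v i).eval x| := by
        simpa only [abs_mul] using
          abs_sum_le_sum_abs (fun i => P.eval (v i) * (Lagrange.basis s v i).eval x) s
    _ ≤ η * lebesgueFunction s v x := by
        rw [lebesgueFunction, mul_sum]
        gcongr with i hi
        exact hη i hi

end LebesgueFunction

section EquispacedNodes

theorem sum_range_inv_factorial_mul_factorial (K : Type*) [Field K] [CharZero K] (d : ℕ) :
    ∑ i ∈ range (d + 1), ((i.factorial : K) * (d - i).factorial)⁻¹ = 2 ^ d / d.factorial := by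
  rw [eq_div_iff (Nat.cast_ne_zero.mpr d.factorial_ne_zero), sum_mul]
  calc ∑ i ∈ range (d + 1), ((i.factorial : K) * (d - i).factorial)⁻¹ * d.factorial
      = ∑ i ∈ range (d + 1), (d.choose i : K) := sum_congr rfl fun i hi => by
        rw [Nat.cast_choose K (mem_range_succ_iff.mp hi), inv_mul_eq_div]
    _ = 2 ^ d := by exact_mod_cast Nat.sum_range_choose d

variable {K : Type*} [Field K] [LinearOrder K] [IsStrictOrderedRing K]

theorem prod_erase_range_abs_sub (a b : ℕ) :
    ∏ k ∈ (range (a + b + 1)).erase a, |(a : K) - k| = a.factorial * b.factorial := by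
  induction b with
  | zero =>
    rw [add_zero, range_add_one, erase_insert notMem_range_self, ← abs_prod,
      prod_range_natCast_sub, ← Nat.descFactorial_eq_prod_range, Nat.descFactorial_self,
      Nat.abs_cast, Nat.factorial_zero, Nat.cast_one, mul_one]
  | succ b ih =>
    have hlast : |(a : K) - (a + b + 1 : ℕ)| = b + 1 := by
      rw [abs_sub_comm, add_assoc, Nat.cast_add, add_sub_cancel_left, Nat.abs_cast, Nat.cast_succ]
    rw [← add_assoc, range_add_one, erase_insert_of_ne (by omega),
      prod_insert (by simp), ih, hlast, Nat.factorial_succ, Nat.cast_mul, Nat.cast_succ]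
    ring

theorem abs_eval_lagrange_basis_equispaced_le {d i : ℕ} (hi : i ≤ d) {u h ℓ x : K} (hh : 0 < h)
    (hx : ∀ k ≤ d, |x - (u + k * h)| ≤ ℓ) :
    |(Lagrange.basis (range (d + 1)) (fun k : ℕ => u + k * h) i).eval x|
      ≤ (ℓ / h) ^ d / (i.factorial * (d - i).factorial) := by
  obtain ⟨b, rfl⟩ := Nat.exists_eq_add_of_le hi
  have hgap (k : ℕ) : |u + i * h - (u + k * h)| = h * |(i : K) - k| := by
    rw [add_sub_add_left_eq_sub, ← sub_mul, abs_mul, abs_of_pos hh, mul_comm]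
  calc |(Lagrange.basis (range (i + b + 1)) (fun k : ℕ => u + k * h) i).eval x|
      = ∏ k ∈ (range (i + b + 1)).erase i, |x - (u + k * h)| / (h * |(i : K) - k|) := by
        simp only [eval_lagrange_basis_eq_prod_div, abs_prod, abs_div, hgap]
    _ ≤ ∏ k ∈ (range (i + b + 1)).erase i, ℓ / h / |(i : K) - k| := by
        simp only [div_div]
        gcongr with k hk
        exact hx k (mem_range_succ_iff.mp (mem_of_mem_erase hk))
    _ = (ℓ / h) ^ (i + b) / (i.factorial * (i + b - i).factorial) := by
        rw [prod_div_distrib, prod_const, card_erase_of_mem (mem_range_succ_iff.mpr hi), card_range,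
          prod_erase_range_abs_sub, Nat.succ_sub_one, Nat.add_sub_cancel_left]

theorem lebesgueFunction_equispaced_le {d : ℕ} {u h ℓ x : K} (hh : 0 < h)
    (hx : ∀ k ≤ d, |x - (u + k * h)| ≤ ℓ) :
    lebesgueFunction (range (d + 1)) (fun k : ℕ => u + k * h) x
      ≤ (2 * ℓ / h) ^ d / d.factorial := by
  calc lebesgueFunction (range (d + 1)) (fun k : ℕ => u + k * h) x
      ≤ ∑ i ∈ range (d + 1), (ℓ / h) ^ d / (i.factorial * (d - i).factorial) :=
        sum_le_sum fun _ hi =>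
          abs_eval_lagrange_basis_equispaced_le (mem_range_succ_iff.mp hi) hh hx
    _ = (2 * ℓ / h) ^ d / d.factorial := by
        simp only [div_eq_mul_inv _ (_ * _ : K)]
        rw [← mul_sum, sum_range_inv_factorial_mul_factorial K d, mul_div_assoc 2 ℓ h, mul_pow]
        ring

theorem abs_eval_le_of_abs_eval_equispaced_le {d : ℕ} {P : Polynomial K} (hP : P.natDegree ≤ d)
    {a b u h η x : K} (hh : 0 < h) (hnode : ∀ k ≤ d, u + k * h ∈ Set.Icc a b)
    (hη : ∀ k ≤ d, |P.eval (u + k * h)| ≤ η) (hx : x ∈ Set.Icc a b) :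
    |P.eval x| ≤ η * ((2 * (b - a) / h) ^ d / d.factorial) := by
  have hinj : Function.Injective fun k : ℕ => u + k * h := fun j k hjk =>
    Nat.cast_injective (mul_right_cancel₀ hh.ne' (add_left_cancel hjk))
  have hdeg : P.degree < #(range (d + 1)) := by
    rw [card_range]
    exact (Polynomial.degree_le_of_natDegree_le hP).trans_lt (by exact_mod_cast d.lt_succ_self)
  have hdist : ∀ k ≤ d, |x - (u + k * h)| ≤ b - a := fun k hk =>
    abs_sub_le_of_le_of_le hx.1 hx.2 (hnode k hk).1 (hnode k hk).2
  have hη_nonneg : 0 ≤ η := (abs_nonneg _).trans (hη 0 d.zero_le)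
  calc |P.eval x| ≤ η * lebesgueFunction (range (d + 1)) (fun k : ℕ => u + k * h) x :=
        abs_eval_le_mul_lebesgueFunction hinj.injOn hdeg
          (fun k hk => hη k (mem_range_succ_iff.mp hk)) x
    _ ≤ η * ((2 * (b - a) / h) ^ d / d.factorial) := by
        gcongr
        exact lebesgueFunction_equispaced_le hh hdist

theorem two_pow_div_factorial_le {d : ℕ} (hd : Even d) :
    (2 : K) ^ d / d.factorial ≤ (d + 1) / (d / 2).factorial ^ 2 := by
  obtain ⟨m, rfl⟩ := even_iff_exists_two_mul.mp hd
  rw [Nat.mul_div_cancel_left m two_pos, div_le_div_iff₀ (by positivity) (by positivity)]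
  have hfactorial : (2 * m).choose m * m.factorial ^ 2 = (2 * m).factorial := by
    simpa only [two_mul, Nat.add_sub_cancel, sq, mul_assoc] using
      Nat.choose_mul_factorial_mul_factorial (Nat.le_add_left m m)
  have hbound : 2 ^ (2 * m) * m.factorial ^ 2 ≤ (2 * m + 1) * (2 * m).factorial := by
    rw [← hfactorial, ← mul_assoc, pow_mul]
    exact Nat.mul_le_mul_right _ (Nat.four_pow_le_two_mul_add_one_mul_central_binom m)
  exact_mod_cast hbound

theorem lagrange_error_propagation_general {d : ℕ} (hd : Even d) {a b c Z : K} (hZ : 0 < Z)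
    (hlow : a ≤ c - d / (2 * Z)) (hhigh : c + d / (2 * Z) ≤ b)
    {p q : Polynomial K} (hp : p.natDegree ≤ d) (hq : q.natDegree ≤ d) {η : K}
    (hnodes : ∀ j ∈ Icc (-((d : ℤ) / 2)) ((d : ℤ) / 2),
      |p.eval (c + j / Z) - q.eval (c + j / Z)| ≤ η) {x : K} (hx : x ∈ Set.Icc a b) :
    |p.eval x - q.eval x|
      ≤ (d + 1) * η * ((b - a) * Z) ^ d / (d / 2).factorial ^ 2 := by
  have hindex (k : ℕ) : c - d / (2 * Z) + k * Z⁻¹ = c + ((k - d / 2 : ℤ) : K) / Z := by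
    rw [Int.cast_sub, Int.cast_div_charZero ((Int.even_coe_nat d).mpr hd).two_dvd]
    push_cast
    field_simp
    ring
  have hmem : ∀ k ≤ d, c - d / (2 * Z) + k * Z⁻¹ ∈ Set.Icc a b := fun k hk => by
    have hspan : (k : K) * Z⁻¹ ≤ d / (2 * Z) + d / (2 * Z) := by
      rw [← div_div, ← add_div, add_halves, ← div_eq_mul_inv]
      gcongr
    have hnonneg : 0 ≤ (k : K) * Z⁻¹ := by positivity
    constructor <;> linarith
  have hη : ∀ k ≤ d, |(p - q).eval (c - d / (2 * Z) + k * Z⁻¹)| ≤ η := fun k hk => by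
    rw [hindex, Polynomial.eval_sub]
    exact hnodes _ (mem_Icc.mpr (by grind))
  have hη_nonneg : 0 ≤ η := (abs_nonneg _).trans (hη 0 d.zero_le)
  have hab : a ≤ b := hx.1.trans hx.2
  have hdeg : (p - q).natDegree ≤ d :=
    (Polynomial.natDegree_sub_le_of_le hp hq).trans_eq (max_self d)
  calc |p.eval x - q.eval x| = |(p - q).eval x| := by rw [Polynomial.eval_sub]
    _ ≤ η * ((2 * (b - a) / Z⁻¹) ^ d / d.factorial) :=
        abs_eval_le_of_abs_eval_equispaced_le hdeg (inv_pos.mpr hZ) hmem hη hx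
    _ = η * ((b - a) * Z) ^ d * (2 ^ d / d.factorial) := by
        rw [div_inv_eq_mul, mul_assoc 2, mul_pow 2]
        ring
    _ ≤ η * ((b - a) * Z) ^ d * ((d + 1) / (d / 2).factorial ^ 2) := by
        have hlength : 0 ≤ b - a := sub_nonneg.mpr hab
        exact mul_le_mul_of_nonneg_left (two_pow_div_factorial_le hd) (by positivity)
    _ = (d + 1) * η * ((b - a) * Z) ^ d / (d / 2).factorial ^ 2 := by ring

end EquispacedNodes

/-- Error propagation through Lagrange interpolation: if two polynomials of degree at most
`d` disagree by at most `η` at each of the `d+1` nodes `1/n + j/Z`, `j = −d/2, …, d/2`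
(with `d` even, nodes in `[0,1]`), then they disagree by at most
`(d+1)·η·Z^d/((d/2)!)²` everywhere on `[0,1]`. -/
theorem lagrange_error_propagation (n d : ℕ) (hn : 2 ≤ n) (hd : 2 ≤ d) (hdeven : Even d)
    (Z : ℝ) (hZ : 0 < Z)
    (hlow : 0 ≤ 1 / (n : ℝ) - (d : ℝ) / (2 * Z))
    (hhigh : 1 / (n : ℝ) + (d : ℝ) / (2 * Z) ≤ 1)
    (node : ℤ → ℝ) (hnode : ∀ j : ℤ, node j = 1 / (n : ℝ) + (j : ℝ) / Z)
    (p q : Polynomial ℝ) (hp : p.natDegree ≤ d) (hq : q.natDegree ≤ d)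
    (η : ℝ) (hη : 0 ≤ η)
    (hnodes : ∀ j ∈ Finset.Icc (-((d : ℤ) / 2)) ((d : ℤ) / 2),
      |p.eval (node j) - q.eval (node j)| ≤ η) :
    ∀ x ∈ Set.Icc (0 : ℝ) 1,
      |p.eval x - q.eval x|
        ≤ ((d : ℝ) + 1) * η * Z ^ d / ((Nat.factorial (d / 2) : ℝ)) ^ 2 := by
  intro x hx
  simpa using lagrange_error_propagation_general hdeven hZ hlow hhigh hp hq
    (by simpa only [hnode] using hnodes) hx
end

section
/- Fix integers n ≥ 3 and even d ≥ 2, and reals λ ∈ (0,1], ε ∈ (0,1], and α ∈ (0, 1/(nd)]. Set β = ε·λ⁴·α^d / (3nd)^{d+2}. Then there exist a finite set Q ⊆ Δ(n) of at most 3d/2 + 1 points, each satisfying ‖q − x_U‖₂ ≤ α, and a map Φ from functions ŝ : Q → ℝⁿ to functions Δ(n) → ℝⁿ, with the following property: for every tuple (f_1, …, f_n) of univariate real polynomials of degree at most d with f_i(t) ∈ [λ, 1] for all t ∈ [0,1], and every ŝ : Q → ℝⁿ satisfying |ŝ(q)_i − f_i(q_i)/Σ_{j=1}^n f_j(q_j)|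 ≤ β for all q ∈ Q and all i, the output satisfies ‖Φ(ŝ)(x) − s(x)‖₂ ≤ ε for every x ∈ Δ(n), where s(x) ∈ ℝⁿ is the normalized score vector s(x)_i = f_i(x_i)/Σ_{j=1}^n f_j(x_j). -/
open Finset

/-!
Normalized scores determine the raw scores of a model only up to a common factor that depends on
the query, so the factors at different queries have to be matched. Call `u` the uniform vector. If a
query `q` leaves a coordinate `c` at its uniform value, then `f c (q c) = f c (u c)`, and with `p`
and `p₀` the normalized scores at `q` and at `u`,
`f i (q i) / ∑ j, f j (u j) = (p i / p c) * p₀ c`.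
So the answers determine the values of the polynomials `f i / ∑ j, f j (u j)` at the queried
coordinates, and Lagrange interpolation extends this to `[0, 1]`.

To serve all coordinates with few queries, split them into three classes and move mass from one
class to the next, cyclically. Each of these three directions leaves the third class untouched, and
each class increases along one direction and decreases along another, so every coordinate runs
through an arithmetic progression centred at its uniform value. The learner outputs the normalized
scores of any model consistent with the answers.
-/

section Interpolation

variable {ι K : Type*} [NormedField K] {s : Finset ι} {v : ι → K} {t : K} {δ R : ℝ}

theorem norm_eval_lagrangeBasis_le [DecidableEq ι] (hδ : 0 < δ)
    (hsep : (s : Set ι).Pairwise fun i j => δ ≤ ‖v i - v j‖) (ht : ∀ i ∈ s, ‖t - v i‖ ≤ R)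
    {i : ι} (hi : i ∈ s) :
    ‖(Lagrange.basis s v i).eval t‖ ≤ (R / δ) ^ (#s - 1) := by
  rw [Lagrange.basis, Polynomial.eval_prod, norm_prod, ← card_erase_of_mem hi, ← prod_const]
  refine prod_le_prod (fun _ _ => norm_nonneg _) fun j hj => ?_
  obtain ⟨hji, hj⟩ := mem_erase.1 hj
  have hR : 0 ≤ R := (norm_nonneg _).trans (ht i hi)
  calc ‖(Lagrange.basisDivisor (v i) (v j)).eval t‖ = ‖t - v j‖ / ‖v i - v j‖ := by
        simp [Lagrange.basisDivisor, div_eq_inv_mul]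
    _ ≤ R / δ := div_le_div₀ hR (ht j hj) hδ (hsep hi hj hji.symm)

theorem norm_eval_le_of_separated_nodes {p : Polynomial K} {η : ℝ} (hp : p.degree < #s)
    (hδ : 0 < δ) (hsep : (s : Set ι).Pairwise fun i j => δ ≤ ‖v i - v j‖)
    (ht : ∀ i ∈ s, ‖t - v i‖ ≤ R) (hη : ∀ i ∈ s, ‖p.eval (v i)‖ ≤ η) :
    ‖p.eval t‖ ≤ #s * (η * (R / δ) ^ (#s - 1)) := by
  classical
  have hinj : Set.InjOn v s := by
    intro i hi j hj hij
    by_contra hne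
    exact hδ.not_ge (by simpa [hij] using hsep hi hj hne)
  rw [Lagrange.eq_interpolate hinj hp, Lagrange.interpolate_apply, Polynomial.eval_finsetSum,
    ← nsmul_eq_mul]
  refine (norm_sum_le _ _).trans (sum_le_card_nsmul _ _ _ fun i hi => ?_)
  rw [Polynomial.eval_mul, Polynomial.eval_C, norm_mul]
  exact mul_le_mul (hη i hi) (norm_eval_lagrangeBasis_le hδ hsep ht hi) (norm_nonneg _)
    ((norm_nonneg _).trans (hη i hi))

end Interpolation

section OrderedField

variable {K : Type*} [Field K] [LinearOrder K] [IsStrictOrderedRing K] {a b a' b' : K}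

theorem abs_mul_sub_mul_le (a b a' b' : K) :
    |a * b - a' * b'| ≤ |a - a'| * |b| + |a'| * |b - b'| := by
  rw [← abs_mul, ← abs_mul]
  calc |a * b - a' * b'| = |(a - a') * b + a' * (b - b')| := by ring_nf
    _ ≤ |(a - a') * b| + |a' * (b - b')| := abs_add_le _ _

theorem abs_div_sub_div_le {γ M μ : K} (hb : b ≠ 0) (hμ : 0 < μ) (hb' : μ ≤ b')
    (hM : |a / b| ≤ M) (haa' : |a - a'| ≤ γ) (hbb' : |b - b'| ≤ γ) :
    |a / b - a' / b'| ≤ (1 + M) * γ / μ := by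
  have hb'0 : 0 < b' := hμ.trans_le hb'
  have hγ : 0 ≤ γ := (abs_nonneg _).trans haa'
  have hM0 : 0 ≤ M := (abs_nonneg _).trans hM
  have hnum : |(a - a') - a / b * (b - b')| ≤ (1 + M) * γ := by
    refine (abs_sub _ _).trans ?_
    rw [abs_mul, one_add_mul]
    gcongr
  calc |a / b - a' / b'| = |((a - a') - a / b * (b - b')) / b'| := by
        congr 1
        field_simp
        ring
    _ = |(a - a') - a / b * (b - b')| / b' := by rw [abs_div, abs_of_pos hb'0]
    _ ≤ (1 + M) * γ / μ := by gcongr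

end OrderedField

theorem sqrt_sum_sq_le_sum_abs {ι : Type*} (s : Finset ι) (a : ι → ℝ) :
    Real.sqrt (∑ i ∈ s, a i ^ 2) ≤ ∑ i ∈ s, |a i| := by
  refine Real.sqrt_le_iff.2 ⟨sum_nonneg fun i _ => abs_nonneg _, ?_⟩
  simpa only [sq_abs] using sum_sq_le_sq_sum_of_nonneg (s := s) fun i _ => abs_nonneg (a i)

section Simplex

variable {ι : Type*} [Fintype ι] {v w x : ι → ℝ}

theorem sum_sq_le_one_of_mem_stdSimplex (hv : v ∈ stdSimplex ℝ ι) : ∑ i, v i ^ 2 ≤ 1 := by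
  rw [← hv.2]
  refine sum_le_sum fun i _ => ?_
  exact pow_le_of_le_one (hv.1 i) (mem_Icc_of_mem_stdSimplex hv i).2 two_ne_zero

theorem sum_sub_sq_le_two_of_mem_stdSimplex (hv : v ∈ stdSimplex ℝ ι) (hw : w ∈ stdSimplex ℝ ι) :
    ∑ i, (v i - w i) ^ 2 ≤ 2 := by
  calc ∑ i, (v i - w i) ^ 2 ≤ ∑ i, (v i ^ 2 + w i ^ 2) := by
        refine sum_le_sum fun i _ => ?_
        nlinarith [mul_nonneg (hv.1 i) (hw.1 i)]
    _ ≤ 2 := by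
        rw [sum_add_distrib]
        linarith [sum_sq_le_one_of_mem_stdSimplex hv, sum_sq_le_one_of_mem_stdSimplex hw]

theorem add_mul_sub_mem_stdSimplex (hx : x ∈ stdSimplex ℝ ι) (hv : v ∈ stdSimplex ℝ ι)
    (hw : w ∈ stdSimplex ℝ ι) {s : ℝ} (hs : 0 ≤ s) (hsx : ∀ i, s ≤ x i) :
    (fun i => x i + s * (v i - w i)) ∈ stdSimplex ℝ ι := by
  refine ⟨fun i => ?_, ?_⟩
  · have hwi : s * w i ≤ s := mul_le_of_le_one_right hs (mem_Icc_of_mem_stdSimplex hw i).2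
    have hvi : 0 ≤ s * v i := mul_nonneg hs (hv.1 i)
    change 0 ≤ x i + s * (v i - w i)
    linarith [hsx i]
  · rw [sum_add_distrib, ← mul_sum, sum_sub_distrib, hx.2, hv.2, hw.2, sub_self, mul_zero, add_zero]

end Simplex

/-- The vector proportional to `u` with entries summing to `1`; it is `0` if `∑ j, u j = 0`. -/
noncomputable def simplexNormalize {ι : Type*} [Fintype ι] (u : ι → ℝ) (i : ι) : ℝ :=
  u i / ∑ j, u j

section Normalization

variable {ι : Type*} [Fintype ι] {u v u₀ v₀ : ι → ℝ} {lam γ E : ℝ}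

theorem simplexNormalize_div {s : ℝ} (hs : s ≠ 0) (u : ι → ℝ) :
    simplexNormalize (fun i => u i / s) = simplexNormalize u := by
  ext i
  rw [simplexNormalize, simplexNormalize, ← sum_div, div_div_div_cancel_right₀ hs]

theorem simplexNormalize_div_simplexNormalize (hu : ∑ j, u j ≠ 0) (i c : ι) :
    simplexNormalize u i / simplexNormalize u c = u i / u c :=
  div_div_div_cancel_right₀ hu _ _

theorem sum_abs_simplexNormalize_sub_le (hu : 0 < ∑ j, u j) (hv : ∀ i, 0 ≤ v i)
    (hv_sum : 0 < ∑ j, v j) :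
    ∑ i, |simplexNormalize u i - simplexNormalize v i| ≤ 2 * (∑ i, |u i - v i|) / ∑ j, u j := by
  have hsums : |∑ j, v j - ∑ j, u j| ≤ ∑ j, |u j - v j| := by
    rw [abs_sub_comm, ← sum_sub_distrib]
    exact abs_sum_le_sum_abs _ _
  have hterm : ∀ i, |simplexNormalize u i - simplexNormalize v i| ≤
      |u i - v i| / ∑ j, u j + v i / (∑ j, v j) * (|∑ j, v j - ∑ j, u j| / ∑ j, u j) := by
    intro i
    have hsplit : simplexNormalize u i - simplexNormalize v i =
        (u i - v i) / ∑ j, u j + v i / (∑ j, v j) * ((∑ j, v j - ∑ j, u j) / ∑ j, u j) := by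
      unfold simplexNormalize
      field_simp
      ring
    rw [hsplit]
    refine (abs_add_le _ _).trans_eq ?_
    rw [abs_mul, abs_div, abs_of_nonneg (div_nonneg (hv i) hv_sum.le), abs_div, abs_of_pos hu]
  refine (sum_le_sum fun i _ => hterm i).trans ?_
  rw [sum_add_distrib, ← sum_div, ← sum_mul, ← sum_div, div_self hv_sum.ne', one_mul, ← add_div,
    two_mul]
  gcongr

theorem sqrt_sum_simplexNormalize_sub_sq_le {μ : ℝ} (hμ : 0 < μ) (hu : μ ≤ ∑ j, u j)
    (hv : ∀ i, 0 ≤ v i) (hv_sum : 0 < ∑ j, v j) (huv : ∀ i, |u i - v i| ≤ E) :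
    Real.sqrt (∑ i, (simplexNormalize u i - simplexNormalize v i) ^ 2) ≤
      2 * (Fintype.card ι * E) / μ := by
  have hsum : ∑ i, |u i - v i| ≤ Fintype.card ι * E := by
    simpa using sum_le_card_nsmul univ _ _ fun i _ => huv i
  have hsum_nonneg : 0 ≤ ∑ i, |u i - v i| := sum_nonneg fun i _ => abs_nonneg _
  calc Real.sqrt (∑ i, (simplexNormalize u i - simplexNormalize v i) ^ 2)
      ≤ ∑ i, |simplexNormalize u i - simplexNormalize v i| := sqrt_sum_sq_le_sum_abs _ _
    _ ≤ 2 * (∑ i, |u i - v i|) / ∑ j, u j :=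
        sum_abs_simplexNormalize_sub_le (hμ.trans_le hu) hv hv_sum
    _ ≤ 2 * (Fintype.card ι * E) / μ := div_le_div₀ (by linarith) (by linarith) hμ hu

theorem sum_mem_Icc_of_forall_mem_Icc (hu : ∀ i, u i ∈ Set.Icc lam 1) :
    ∑ j, u j ∈ Set.Icc (Fintype.card ι * lam) (Fintype.card ι) := by
  constructor
  · simpa using card_nsmul_le_sum univ u lam fun i _ => (hu i).1
  · simpa using sum_le_card_nsmul univ u 1 fun i _ => (hu i).2

theorem sum_pos_of_forall_mem_Icc [Nonempty ι] (hlam : 0 < lam) (hu : ∀ i, u i ∈ Set.Icc lam 1) :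
    0 < ∑ j, u j :=
  sum_pos (fun i _ => hlam.trans_le (hu i).1) univ_nonempty

theorem simplexNormalize_mem_Icc [Nonempty ι] (hlam : 0 < lam) (hu : ∀ i, u i ∈ Set.Icc lam 1)
    (i : ι) :
    simplexNormalize u i ∈ Set.Icc (lam / Fintype.card ι) (1 / (Fintype.card ι * lam)) := by
  obtain ⟨hlower, hupper⟩ := sum_mem_Icc_of_forall_mem_Icc hu
  have hcard : 0 < Fintype.card ι * lam := by positivity
  exact ⟨div_le_div₀ (hlam.le.trans (hu i).1) (hu i).1 (hcard.trans_le hlower) hupper,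
    div_le_div₀ zero_le_one (hu i).2 hcard hlower⟩

theorem abs_simplexNormalize_div_simplexNormalize_le (hlam : 0 < lam)
    (hu : ∀ i, u i ∈ Set.Icc lam 1) (i c : ι) :
    |simplexNormalize u i / simplexNormalize u c| ≤ 1 / lam := by
  have : Nonempty ι := ⟨i⟩
  rw [simplexNormalize_div_simplexNormalize (sum_pos_of_forall_mem_Icc hlam hu).ne',
    abs_of_pos (div_pos (hlam.trans_le (hu i).1) (hlam.trans_le (hu c).1))]
  exact div_le_div₀ zero_le_one (hu i).2 hlam (hu c).1

theorem div_sum_eq_simplexNormalize {c : ι} (hc : u c = u₀ c) (huc : u c ≠ 0)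
    (hu : ∑ j, u j ≠ 0) (i : ι) :
    u i / ∑ j, u₀ j = simplexNormalize u i / simplexNormalize u c * simplexNormalize u₀ c := by
  rw [simplexNormalize_div_simplexNormalize hu, simplexNormalize, ← hc, div_mul_div_cancel₀ huc]

/-- In the application `u` and `u₀` are the raw scores of one model at a query and at the uniform
vector, and `v` and `v₀` those of another model. -/
theorem abs_div_sum_sub_div_sum_le (hlam : 0 < lam) (hu : ∀ i, u i ∈ Set.Icc lam 1)
    (hv : ∀ i, v i ∈ Set.Icc lam 1) (hu₀ : ∀ i, u₀ i ∈ Set.Icc lam 1) {c : ι} (huc : u c = u₀ c)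
    (hvc : v c = v₀ c) (huv : ∀ i, |simplexNormalize u i - simplexNormalize v i| ≤ γ)
    (huv₀ : |simplexNormalize u₀ c - simplexNormalize v₀ c| ≤ γ) (i : ι) :
    |u i / ∑ j, u₀ j - v i / ∑ j, v₀ j| ≤ 3 * γ / lam ^ 3 := by
  have : Nonempty ι := ⟨i⟩
  have hlam1 : lam ≤ 1 := (hu i).1.trans (hu i).2
  have hγ : 0 ≤ γ := (abs_nonneg _).trans (huv i)
  have hn : (0 : ℝ) < lam / Fintype.card ι := by positivity
  have hu₀c := simplexNormalize_mem_Icc hlam hu₀ c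
  have hratio := abs_div_sub_div_le (hn.trans_le (simplexNormalize_mem_Icc hlam hu c).1).ne' hn
    (simplexNormalize_mem_Icc hlam hv c).1
    (abs_simplexNormalize_div_simplexNormalize_le hlam hu i c) (huv i) (huv c)
  rw [div_sum_eq_simplexNormalize huc (hlam.trans_le (hu c).1).ne'
      (sum_pos_of_forall_mem_Icc hlam hu).ne',
    div_sum_eq_simplexNormalize hvc (hlam.trans_le (hv c).1).ne'
      (sum_pos_of_forall_mem_Icc hlam hv).ne']
  refine (abs_mul_sub_mul_le _ _ _ _).trans ?_
  rw [abs_of_pos (hn.trans_le hu₀c.1)]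
  calc _ ≤ (1 + 1 / lam) * γ / (lam / Fintype.card ι) * (1 / (Fintype.card ι * lam)) +
          1 / lam * γ :=
        add_le_add (mul_le_mul hratio hu₀c.2 (hn.le.trans hu₀c.1) (by positivity))
          (mul_le_mul (abs_simplexNormalize_div_simplexNormalize_le hlam hv i c) huv₀
            (abs_nonneg _) (by positivity))
    _ = (1 + lam + lam ^ 2) * γ / lam ^ 3 := by
        field_simp
        ring
    _ ≤ 3 * γ / lam ^ 3 := by
        gcongr
        nlinarith

end Normalization

/-- A bounded-degree univariate polynomial preference model: degree at most `d` and scores in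
`[lam, 1]` on `[0, 1]`. -/
structure IsPolynomialModel {ι : Type*} (lam : ℝ) (d : ℕ) (f : ι → Polynomial ℝ) : Prop where
  natDegree_le : ∀ i, (f i).natDegree ≤ d
  eval_mem_Icc : ∀ i, ∀ t ∈ Set.Icc (0 : ℝ) 1, (f i).eval t ∈ Set.Icc lam 1

/-- The normalized score vector `s(x)` of the model `f` at the memory vector `x`. -/
noncomputable def score {ι : Type*} [Fintype ι] (f : ι → Polynomial ℝ) (x : ι → ℝ) : ι → ℝ :=
  simplexNormalize fun i => (f i).eval (x i)

/-- The queries `Q` resolve polynomials of degree `d` relative to the reference point `u`: in every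
coordinate, `d + 1` values with pairwise distances at least `δ` occur at points of `Q` that agree
with `u` in some coordinate. -/
def Resolves {ι : Type*} (Q : Set (ι → ℝ)) (u : ι → ℝ) (d : ℕ) (δ : ℝ) : Prop :=
  ∀ i, ∃ s : Finset ℝ, #s = d + 1 ∧ (s : Set ℝ).Pairwise (fun y z => δ ≤ |y - z|) ∧
    ∀ y ∈ s, ∃ q ∈ Q, q i = y ∧ ∃ c, q c = u c

section Stability

variable {ι : Type*} [Fintype ι] {Q : Set (ι → ℝ)} {u x : ι → ℝ} {d : ℕ} {δ lam γ : ℝ}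
  {f g : ι → Polynomial ℝ}

theorem Resolves.abs_eval_div_sum_sub_le (hQ : Resolves Q u d δ) (hδ : 0 < δ) (hlam : 0 < lam)
    (hu : u ∈ Q) (hQ_Icc : ∀ q ∈ Q, ∀ i, q i ∈ Set.Icc (0 : ℝ) 1) (hf : IsPolynomialModel lam d f)
    (hg : IsPolynomialModel lam d g) (hfg : ∀ q ∈ Q, ∀ i, |score f q i - score g q i| ≤ γ) (i : ι)
    {t : ℝ} (ht : t ∈ Set.Icc (0 : ℝ) 1) :
    |(f i).eval t / ∑ j, (f j).eval (u j) - (g i).eval t / ∑ j, (g j).eval (u j)| ≤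
      (d + 1) * (3 * γ / lam ^ 3 * (1 / δ) ^ d) := by
  obtain ⟨s, hs, hsep, hnode⟩ := hQ i
  let D : Polynomial ℝ := Polynomial.C (∑ j, (f j).eval (u j))⁻¹ * f i -
    Polynomial.C (∑ j, (g j).eval (u j))⁻¹ * g i
  have hD : ∀ y, D.eval y =
      (f i).eval y / ∑ j, (f j).eval (u j) - (g i).eval y / ∑ j, (g j).eval (u j) := by
    intro y
    simp [D, inv_mul_eq_div]
  have hD_natDegree : D.natDegree ≤ d :=
    (Polynomial.natDegree_sub_le _ _).trans (max_le
      ((Polynomial.natDegree_C_mul_le _ _).trans (hf.natDegree_le i))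
      ((Polynomial.natDegree_C_mul_le _ _).trans (hg.natDegree_le i)))
  have hD_degree : D.degree < #s := by
    rw [hs]
    exact Polynomial.degree_le_natDegree.trans_lt (by exact_mod_cast Nat.lt_succ_of_le hD_natDegree)
  have hdist : ∀ y ∈ s, |t - y| ≤ 1 := by
    intro y hy
    obtain ⟨q, hq, rfl, -⟩ := hnode y hy
    have hqi := hQ_Icc q hq i
    exact abs_le.2 ⟨by linarith [ht.1, hqi.2], by linarith [ht.2, hqi.1]⟩
  have hD_node : ∀ y ∈ s, |D.eval y| ≤ 3 * γ / lam ^ 3 := by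
    intro y hy
    obtain ⟨q, hq, rfl, c, hc⟩ := hnode y hy
    rw [hD]
    exact abs_div_sum_sub_div_sum_le hlam (fun j => hf.eval_mem_Icc j _ (hQ_Icc q hq j))
      (fun j => hg.eval_mem_Icc j _ (hQ_Icc q hq j)) (fun j => hf.eval_mem_Icc j _ (hQ_Icc u hu j))
      (congrArg (f c).eval hc) (congrArg (g c).eval hc) (hfg q hq) (hfg u hu c) i
  have hinterp := norm_eval_le_of_separated_nodes (v := id) hD_degree hδ hsep hdist hD_node
  rwa [Real.norm_eq_abs, hD, hs, Nat.add_sub_cancel, Nat.cast_succ] at hinterp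

theorem Resolves.sqrt_sum_score_sub_sq_le (hQ : Resolves Q u d δ) (hδ : 0 < δ) (hlam : 0 < lam)
    (hu : u ∈ Q) (hQ_Icc : ∀ q ∈ Q, ∀ i, q i ∈ Set.Icc (0 : ℝ) 1) (hf : IsPolynomialModel lam d f)
    (hg : IsPolynomialModel lam d g) (hfg : ∀ q ∈ Q, ∀ i, |score f q i - score g q i| ≤ γ)
    (hx : ∀ i, x i ∈ Set.Icc (0 : ℝ) 1) :
    Real.sqrt (∑ i, (score f x i - score g x i) ^ 2) ≤
      2 * (Fintype.card ι * ((d + 1) * (3 * γ / lam ^ 3 * (1 / δ) ^ d))) / lam := by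
  rcases isEmpty_or_nonempty ι with _ | _
  · simp
  have hfx := fun i => hf.eval_mem_Icc i _ (hx i)
  have hgx := fun i => hg.eval_mem_Icc i _ (hx i)
  have hfu := fun i => hf.eval_mem_Icc i _ (hQ_Icc u hu i)
  have hfu_pos := sum_pos_of_forall_mem_Icc hlam hfu
  have hgu_pos := sum_pos_of_forall_mem_Icc hlam fun i => hg.eval_mem_Icc i _ (hQ_Icc u hu i)
  rw [score, score, ← simplexNormalize_div hfu_pos.ne' fun i => (f i).eval (x i),
    ← simplexNormalize_div hgu_pos.ne' fun i => (g i).eval (x i)]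
  refine sqrt_sum_simplexNormalize_sub_sq_le hlam ?_
    (fun i => div_nonneg (hlam.le.trans (hgx i).1) hgu_pos.le) ?_
    (fun i => hQ.abs_eval_div_sum_sub_le hδ hlam hu hQ_Icc hf hg hfg i (hx i))
  · rw [← sum_div, le_div_iff₀ hfu_pos, mul_comm]
    exact (mul_le_mul_of_nonneg_right (sum_mem_Icc_of_forall_mem_Icc hfu).2 hlam.le).trans
      (sum_mem_Icc_of_forall_mem_Icc hfx).1
  · rw [← sum_div]
    exact div_pos (sum_pos_of_forall_mem_Icc hlam hgx) hgu_pos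

end Stability

/-- The uniform distribution on the fibre of `κ` over `j`; it is `0` if that fibre is empty. -/
noncomputable def fiberUniform {ι J : Type*} [Fintype ι] [DecidableEq J] (κ : ι → J) (j : J)
    (i : ι) : ℝ :=
  if κ i = j then 1 / (#{i | κ i = j} : ℝ) else 0

/-- The uniform vector after moving mass `s` from the class `j + 1` of `κ` to the class `j`. -/
noncomputable def transfer {ι : Type*} [Fintype ι] (κ : ι → Fin 3) (j : Fin 3) (s : ℝ) (i : ι) :
    ℝ :=
  1 / (Fintype.card ι : ℝ) + s * (fiberUniform κ j i - fiberUniform κ (j + 1) i)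

/-- The uniform vector and its transfers of mass `τ, 2 τ, …, m τ` along the three cyclic
directions. -/
noncomputable def queryPoints {ι : Type*} [Fintype ι] (κ : ι → Fin 3) (m : ℕ) (τ : ℝ) :
    Finset (ι → ℝ) :=
  insert (fun _ => 1 / (Fintype.card ι : ℝ))
    ((univ ×ˢ Icc 1 m).image fun p : Fin 3 × ℕ => transfer κ p.1 (p.2 * τ))

section Queries

variable {ι : Type*} [Fintype ι]

theorem uniform_mem_stdSimplex [Nonempty ι] :
    (fun _ => 1 / (Fintype.card ι : ℝ)) ∈ stdSimplex ℝ ι :=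
  ⟨fun _ => by positivity, by simp⟩

theorem fiberUniform_mem_stdSimplex {J : Type*} [DecidableEq J] {κ : ι → J}
    (hκ : Function.Surjective κ) (j : J) : fiberUniform κ j ∈ stdSimplex ℝ ι := by
  obtain ⟨i₀, hi₀⟩ := hκ j
  have hcard : (#{i | κ i = j} : ℝ) ≠ 0 := by
    exact_mod_cast (card_pos.2 ⟨i₀, by simpa using hi₀⟩).ne'
  refine ⟨fun i => ?_, ?_⟩
  · unfold fiberUniform
    positivity
  · simp [fiberUniform, ← sum_filter, hcard]

theorem fiberUniform_of_ne {J : Type*} [DecidableEq J] {κ : ι → J} {i : ι} {j : J}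
    (h : κ i ≠ j) : fiberUniform κ j i = 0 :=
  if_neg h

theorem one_div_card_le_fiberUniform {J : Type*} [DecidableEq J] (κ : ι → J) (i : ι) :
    1 / (Fintype.card ι : ℝ) ≤ fiberUniform κ (κ i) i := by
  rw [fiberUniform, if_pos rfl]
  have hpos : 0 < #{i' | κ i' = κ i} := card_pos.2 ⟨i, by simp⟩
  gcongr
  exact card_le_univ _

variable {κ : ι → Fin 3} {m d : ℕ} {τ α s : ℝ} {q : ι → ℝ}

theorem transfer_apply_self (s : ℝ) (i : ι) :
    transfer κ (κ i) s i = 1 / Fintype.card ι + s * fiberUniform κ (κ i) i := by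
  have hne : ∀ j : Fin 3, j ≠ j + 1 := by decide
  rw [transfer, fiberUniform_of_ne (hne _), sub_zero]

theorem transfer_apply_sub_one (s : ℝ) (i : ι) :
    transfer κ (κ i - 1) s i = 1 / Fintype.card ι - s * fiberUniform κ (κ i) i := by
  have hne : ∀ j : Fin 3, j ≠ j - 1 := by decide
  rw [transfer, sub_add_cancel, fiberUniform_of_ne (hne _)]
  ring

theorem exists_transfer_apply_eq (hκ : Function.Surjective κ) (j : Fin 3) (s : ℝ) :
    ∃ c, transfer κ j s c = 1 / Fintype.card ι := by
  have hthird : j + 2 ≠ j ∧ j + 2 ≠ j + 1 := by decide +revert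
  obtain ⟨c, hc⟩ := hκ (j + 2)
  refine ⟨c, ?_⟩
  rw [transfer, fiberUniform_of_ne (hc.trans_ne hthird.1),
    fiberUniform_of_ne (hc.trans_ne hthird.2), sub_self, mul_zero, add_zero]

theorem transfer_mem_stdSimplex [Nonempty ι] (hκ : Function.Surjective κ) (j : Fin 3) (hs : 0 ≤ s)
    (hsn : s ≤ 1 / Fintype.card ι) : transfer κ j s ∈ stdSimplex ℝ ι :=
  add_mul_sub_mem_stdSimplex uniform_mem_stdSimplex (fiberUniform_mem_stdSimplex hκ j)
    (fiberUniform_mem_stdSimplex hκ (j + 1)) hs fun _ => hsn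

theorem sum_transfer_sub_sq_le (hκ : Function.Surjective κ) (j : Fin 3) (s : ℝ) :
    ∑ i, (transfer κ j s i - 1 / Fintype.card ι) ^ 2 ≤ 2 * s ^ 2 := by
  simp only [transfer, add_sub_cancel_left, mul_pow, ← mul_sum]
  rw [mul_comm]
  gcongr
  exact sum_sub_sq_le_two_of_mem_stdSimplex (fiberUniform_mem_stdSimplex hκ j)
    (fiberUniform_mem_stdSimplex hκ (j + 1))

theorem card_queryPoints_le (κ : ι → Fin 3) (m : ℕ) (τ : ℝ) : #(queryPoints κ m τ) ≤ 3 * m + 1 := by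
  refine (card_insert_le _ _).trans ?_
  gcongr
  exact card_image_le.trans (by simp)

theorem mem_queryPoints_iff :
    q ∈ queryPoints κ m τ ↔ ∃ j, ∃ l : ℕ, l ≤ m ∧ transfer κ j (l * τ) = q := by
  have hzero : ∀ j, transfer κ j 0 = fun _ => 1 / (Fintype.card ι : ℝ) := fun j => by
    ext
    simp [transfer]
  simp only [queryPoints, mem_insert, mem_image, mem_product, mem_univ, true_and, mem_Icc,
    Prod.exists]
  constructor
  · rintro (rfl | ⟨j, l, ⟨-, hl⟩, rfl⟩)
    · exact ⟨0, 0, m.zero_le, by rw [Nat.cast_zero, zero_mul, hzero]⟩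
    · exact ⟨j, l, hl, rfl⟩
  · rintro ⟨j, l, hl, rfl⟩
    rcases l.eq_zero_or_pos with rfl | hl0
    · exact Or.inl (by rw [Nat.cast_zero, zero_mul, hzero])
    · exact Or.inr ⟨j, l, ⟨hl0, hl⟩, rfl⟩

theorem queryPoints_subset_stdSimplex [Nonempty ι] (hκ : Function.Surjective κ) (hτ : 0 ≤ τ)
    (hmτ : m * τ ≤ 1 / Fintype.card ι) : ↑(queryPoints κ m τ) ⊆ stdSimplex ℝ ι := by
  intro q hq
  obtain ⟨j, l, hl, rfl⟩ := mem_queryPoints_iff.1 hq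
  refine transfer_mem_stdSimplex hκ j (by positivity) (le_trans ?_ hmτ)
  gcongr

theorem sqrt_sum_sub_sq_le_of_mem_queryPoints (hκ : Function.Surjective κ) (hτ : 0 ≤ τ)
    (hmτ : m * τ ≤ α / 2) (hq : q ∈ queryPoints κ m τ) :
    Real.sqrt (∑ i, (q i - 1 / Fintype.card ι) ^ 2) ≤ α := by
  obtain ⟨j, l, hl, rfl⟩ := mem_queryPoints_iff.1 hq
  have hlτ : 0 ≤ l * τ := by positivity
  have hlα : l * τ ≤ α / 2 := le_trans (by gcongr) hmτ
  refine Real.sqrt_le_iff.2 ⟨by linarith, (sum_transfer_sub_sq_le hκ j _).trans ?_⟩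
  nlinarith

theorem exists_mem_queryPoints_apply_eq (hκ : Function.Surjective κ) (i : ι) {k : ℤ}
    (hk : k.natAbs ≤ m) :
    ∃ q ∈ queryPoints κ m τ, q i = 1 / Fintype.card ι + k * (τ * fiberUniform κ (κ i) i) ∧
      ∃ c, q c = 1 / Fintype.card ι := by
  obtain ⟨l, rfl | rfl⟩ := k.eq_nat_or_neg
  · refine ⟨_, mem_queryPoints_iff.2 ⟨κ i, l, by simpa using hk, rfl⟩, ?_,
      exists_transfer_apply_eq hκ _ _⟩
    rw [transfer_apply_self, Int.cast_natCast, mul_assoc]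
  · refine ⟨_, mem_queryPoints_iff.2 ⟨κ i - 1, l, by simpa using hk, rfl⟩, ?_,
      exists_transfer_apply_eq hκ _ _⟩
    rw [transfer_apply_sub_one, Int.cast_neg, Int.cast_natCast]
    ring

theorem resolves_queryPoints (hκ : Function.Surjective κ) (hτ : 0 < τ) (hd : d ≤ 2 * m) :
    Resolves (queryPoints κ m τ : Set (ι → ℝ)) (fun _ => 1 / (Fintype.card ι : ℝ)) d
      (τ / Fintype.card ι) := by
  intro i
  have : Nonempty ι := ⟨i⟩
  let h := τ * fiberUniform κ (κ i) i
  have hh : τ / Fintype.card ι ≤ h := by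
    rw [div_eq_mul_one_div]
    exact mul_le_mul_of_nonneg_left (one_div_card_le_fiberUniform κ i) hτ.le
  have hh_pos : 0 < h := lt_of_lt_of_le (by positivity) hh
  let node (k : ℤ) : ℝ := 1 / Fintype.card ι + k * h
  have hnode_sub : ∀ k l, |node k - node l| = |(k : ℝ) - l| * h := by
    intro k l
    rw [add_sub_add_left_eq_sub, ← sub_mul, abs_mul, abs_of_pos hh_pos]
  have hsep : ∀ k l, k ≠ l → τ / Fintype.card ι ≤ |node k - node l| := by
    intro k l hkl
    have hone : (1 : ℝ) ≤ |(k : ℝ) - l| := by exact_mod_cast Int.one_le_abs (sub_ne_zero.2 hkl)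
    rw [hnode_sub]
    exact hh.trans (le_mul_of_one_le_left hh_pos.le hone)
  have hinj : Function.Injective node := fun k l hkl => by
    simpa [node, hh_pos.ne'] using hkl
  refine ⟨(Ico (-m : ℤ) (d + 1 - m)).image node, ?_, ?_, ?_⟩
  · rw [card_image_of_injective _ hinj, Int.card_Ico]
    omega
  · rw [coe_image]
    rintro _ ⟨k, -, rfl⟩ _ ⟨l, -, rfl⟩ hkl
    exact hsep k l (ne_of_apply_ne node hkl)
  · intro y hy
    obtain ⟨k, hk, rfl⟩ := mem_image.1 hy
    rw [mem_Ico] at hk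
    exact exists_mem_queryPoints_apply_eq hκ i (by omega)

end Queries

/-- The model `f` explains the answers `sHat` to the queries `Q` up to an `ℓ∞` error `β`. -/
def IsConsistent {ι : Type*} [Fintype ι] {Q : Finset (ι → ℝ)} (lam : ℝ) (d : ℕ) (β : ℝ)
    (sHat : Q → ι → ℝ) (f : ι → Polynomial ℝ) : Prop :=
  IsPolynomialModel lam d f ∧ ∀ q i, |sHat q i - score f q i| ≤ β

theorem IsConsistent.abs_score_sub_le {ι : Type*} [Fintype ι] {Q : Finset (ι → ℝ)} {lam β : ℝ}
    {d : ℕ} {sHat : Q → ι → ℝ} {f g : ι → Polynomial ℝ} (hf : IsConsistent lam d β sHat f)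
    (hg : IsConsistent lam d β sHat g) {q : ι → ℝ} (hq : q ∈ Q) (i : ι) :
    |score f q i - score g q i| ≤ 2 * β := by
  have hfq := hf.2 ⟨q, hq⟩ i
  rw [abs_sub_comm] at hfq
  linarith [abs_sub_le (score f q i) (sHat ⟨q, hq⟩ i) (score g q i), hg.2 ⟨q, hq⟩ i]

theorem learning_error_le {n d : ℕ} (hn : 3 ≤ n) (hd : 1 ≤ d) {lam ε α β : ℝ} (hlam : 0 < lam)
    (hε : 0 ≤ ε) (hα : 0 < α) (hβ : β ≤ ε * lam ^ 4 * α ^ d / (3 * n * d) ^ (d + 2)) :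
    2 * (n * ((d + 1) * (3 * (2 * β) / lam ^ 3 * (1 / (α / (2 * d) / n)) ^ d))) / lam ≤ ε := by
  have hn' : (3 : ℝ) ≤ n := by exact_mod_cast hn
  have hd' : (1 : ℝ) ≤ d := by exact_mod_cast hd
  have hlinear : 12 * n * ((d : ℝ) + 1) ≤ (3 * n * d) ^ 2 := by
    calc 12 * n * ((d : ℝ) + 1) ≤ 12 * n * (d + d) := by gcongr
      _ ≤ 9 * (3 * n) * (d * 1) := by linarith [show (0 : ℝ) ≤ n * d by positivity]
      _ ≤ 9 * (n * n) * (d * d) := by gcongr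
      _ = (3 * n * d) ^ 2 := by ring
  have hpower : (2 * (n : ℝ) * d) ^ d ≤ (3 * n * d) ^ d := by
    gcongr
    norm_num
  calc _ ≤ 2 * (n * ((d + 1) * (3 * (2 * (ε * lam ^ 4 * α ^ d / (3 * n * d) ^ (d + 2))) / lam ^ 3 *
          (1 / (α / (2 * d) / n)) ^ d))) / lam := by gcongr
    _ = ε * ((12 * n * (d + 1)) * (2 * n * d) ^ d / (3 * n * d) ^ (d + 2)) := by
        rw [show 1 / (α / (2 * d) / n) = 2 * n * d / α by field_simp, div_pow]
        field_simp
        ring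
    _ ≤ ε * 1 := by
        gcongr
        rw [div_le_one (by positivity), add_comm d, pow_add]
        gcongr
    _ = ε := mul_one ε

theorem exists_surjective_fin_of_le_card {ι : Type*} [Fintype ι] {k : ℕ} [NeZero k]
    (h : k ≤ Fintype.card ι) : ∃ κ : ι → Fin k, Function.Surjective κ := by
  obtain ⟨e⟩ := Function.Embedding.nonempty_of_card_le (α := Fin k) (β := ι) (by simpa using h)
  exact ⟨Function.invFun e, Function.invFun_surjective e.injective⟩

theorem bup_locally_learnable_general {ι : Type*} [Fintype ι] (hι : 3 ≤ Fintype.card ι) {d : ℕ}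
    (hd : 1 ≤ d) {lam ε α β : ℝ} (hlam : 0 < lam) (hε : 0 ≤ ε)
    (hα : α ∈ Set.Ioc (0 : ℝ) (1 / Fintype.card ι))
    (hβ : β ≤ ε * lam ^ 4 * α ^ d / (3 * Fintype.card ι * d) ^ (d + 2)) :
    ∃ (Q : Finset (ι → ℝ)) (Φ : (Q → ι → ℝ) → (ι → ℝ) → ι → ℝ),
      ↑Q ⊆ stdSimplex ℝ ι ∧
      #Q ≤ 3 * ((d + 1) / 2) + 1 ∧
      (∀ q ∈ Q, Real.sqrt (∑ i, (q i - 1 / Fintype.card ι) ^ 2) ≤ α) ∧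
      ∀ f : ι → Polynomial ℝ, IsPolynomialModel lam d f →
        ∀ sHat : Q → ι → ℝ, (∀ q i, |sHat q i - score f q i| ≤ β) →
          ∀ x ∈ stdSimplex ℝ ι, Real.sqrt (∑ i, (Φ sHat x i - score f x i) ^ 2) ≤ ε := by
  obtain ⟨hα0, hαn⟩ := hα
  obtain ⟨κ, hκ⟩ := exists_surjective_fin_of_le_card hι
  have : Nonempty ι := Fintype.card_pos_iff.1 (by omega)
  set m := (d + 1) / 2
  set τ := α / (2 * d) with hτ_def
  have hτ : 0 < τ := by positivity
  have hmτ : m * τ ≤ α / 2 := by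
    calc m * τ ≤ d * τ := by gcongr; omega
      _ = α / 2 := by rw [hτ_def]; field_simp
  have hsimplex : ↑(queryPoints κ m τ) ⊆ stdSimplex ℝ ι :=
    queryPoints_subset_stdSimplex hκ hτ.le (by linarith)
  refine ⟨queryPoints κ m τ, fun sHat => score (Classical.epsilon (IsConsistent lam d β sHat)),
    hsimplex, card_queryPoints_le κ m τ,
    fun q => sqrt_sum_sub_sq_le_of_mem_queryPoints hκ hτ.le hmτ, fun f hf sHat hs x hx => ?_⟩
  have hf_consistent : IsConsistent lam d β sHat f := ⟨hf, hs⟩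
  have hg_consistent := Classical.epsilon_spec ⟨f, hf_consistent⟩
  exact ((resolves_queryPoints hκ hτ (by omega)).sqrt_sum_score_sub_sq_le (by positivity) hlam
    (mem_insert_self _ _) (fun q hq i => mem_Icc_of_mem_stdSimplex (hsimplex hq) i)
    hg_consistent.1 hf (fun q hq => hg_consistent.abs_score_sub_le hf_consistent hq)
    (fun i => mem_Icc_of_mem_stdSimplex hx i)).trans (learning_error_le hι hd hlam hε hα0 hβ)

/-- Local learnability of bounded-degree univariate polynomial preference models:
with `β = ε·λ⁴·α^d / (3nd)^{d+2}`, there is a set `Q` of at most `3d/2 + 1` query points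
in the `α`-ball (in `ℓ₂`) around the uniform vector, and a learning map `Φ` taking
answer functions `ŝ : Q → ℝⁿ` to hypothesis score functions on the simplex, such that
whenever the answers are `β`-accurate (in `ℓ∞`) for the normalized scores of a model
given by degree-`≤ d` polynomials `f_i` with values in `[λ, 1]` on `[0,1]`, the hypothesis
is `ε`-accurate (in `ℓ₂`) for the normalized scores everywhere on the simplex. -/
theorem bup_locally_learnable (n d : ℕ) (hn : 3 ≤ n) (hd : 2 ≤ d) (hdeven : Even d)
    (lam ε α β : ℝ)
    (hlam : lam ∈ Set.Ioc (0 : ℝ) 1) (hε : ε ∈ Set.Ioc (0 : ℝ) 1)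
    (hα : α ∈ Set.Ioc (0 : ℝ) (1 / ((n : ℝ) * d)))
    (hβ : β = ε * lam ^ 4 * α ^ d / ((3 : ℝ) * n * d) ^ (d + 2)) :
    ∃ (Q : Finset (Fin n → ℝ))
      (Φ : ({q : Fin n → ℝ // q ∈ Q} → Fin n → ℝ) → (Fin n → ℝ) → Fin n → ℝ),
      (↑Q ⊆ stdSimplex ℝ (Fin n)) ∧
      Q.card ≤ 3 * d / 2 + 1 ∧
      (∀ q ∈ Q, Real.sqrt (∑ i, (q i - 1 / n) ^ 2) ≤ α) ∧
      ∀ f : Fin n → Polynomial ℝ,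
        (∀ i, (f i).natDegree ≤ d) →
        (∀ i, ∀ t ∈ Set.Icc (0 : ℝ) 1, (f i).eval t ∈ Set.Icc lam 1) →
        ∀ sHat : {q : Fin n → ℝ // q ∈ Q} → Fin n → ℝ,
          (∀ (q : {q : Fin n → ℝ // q ∈ Q}) (i : Fin n),
            |sHat q i - (f i).eval ((q : Fin n → ℝ) i)
              / ∑ j, (f j).eval ((q : Fin n → ℝ) j)| ≤ β) →
          ∀ x ∈ stdSimplex ℝ (Fin n),
            Real.sqrt (∑ i, (Φ sHat x i
              - (f i).eval (x i) / ∑ j, (f j).eval (x j)) ^ 2) ≤ ε := by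
  have hαn : 1 / ((n : ℝ) * d) ≤ 1 / n :=
    one_div_le_one_div_of_le (by positivity) (le_mul_of_one_le_right (by positivity)
      (by exact_mod_cast (by omega : 1 ≤ d)))
  obtain ⟨Q, Φ, hQ_simplex, hQ_card, hQ_ball, hΦ⟩ := bup_locally_learnable_general
    (ι := Fin n) (d := d) (by simpa using hn) (by omega) hlam.1 hε.1.le
    ⟨hα.1, by simpa using hα.2.trans hαn⟩ (by simpa using hβ.le)
  exact ⟨Q, Φ, hQ_simplex, by have := Nat.even_iff.1 hdeven; omega, by simpa using hQ_ball,
    fun f hdeg hf => hΦ f ⟨hdeg, hf⟩⟩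
end
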